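/- Let d ≥ 1 and let u : [0,∞) × ℝ^d → ℝ^d be smooth, ℤ^d-periodic in x, bounded on [0,T] × ℝ^d for every T > 0, and divergence-free in x. Suppose u is relaxation enhancing in the following sense: there is a function τ : (0,∞) → (0,∞) with ν·τ(ν) → 0 as ν → 0⁺ such that for every ν > 0, every s ≥ 0, and every smooth, ℤ^d-periodic-in-x, mean-zero solution θ of ∂_t θ − νΔθ + u·∇θ = 0 on [s,∞) × ℝ^d, one has ‖θ(s+τ(ν),·)‖_{L²} ≤ (1/2)‖θ(s,·)‖_{L²}. Assume moreover that the function f(a) := sup_{0 < b ≤ a} b·τ(b) is a strictly increasing continuous bijection from (0,∞) onto (0,∞). Then the diffeomorphism σ in the total dissipation theorem can be chosen so that additionally, for all t ∈ [0,1), σ'(t) ≤ 2(|log₂(1−t)| + 1) / f⁻¹( (1−t) / (4(|log₂(1−t)| + 1)) ). -/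

import Mathlib

open Real MeasureTheory Filter

/-- Spatial partial derivative in the `i`-th coordinate direction. -/
noncomputable def pd (d : ℕ) (i : Fin d) (f : (Fin d → ℝ) → ℝ) (x : Fin d → ℝ) : ℝ :=
  fderiv ℝ f x (Pi.single i 1)

/-- Spatial Laplacian: sum of second partial derivatives. -/
noncomputable def lap (d : ℕ) (f : (Fin d → ℝ) → ℝ) (x : Fin d → ℝ) : ℝ :=
  ∑ i, pd d i (fun y => pd d i f y) x

/-- The `L²` norm on the unit cell `[0,1]^d` of a `ℤ^d`-periodic function. -/
noncomputable def L2norm (d : ℕ) (f : (Fin d → ℝ) → ℝ) : ℝ :=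
  Real.sqrt (∫ x in Set.Icc (0 : Fin d → ℝ) 1, (f x) ^ 2)

/-- `ℤ^d`-periodicity. -/
def PeriodicIn (d : ℕ) (f : (Fin d → ℝ) → ℝ) : Prop :=
  ∀ x : Fin d → ℝ, ∀ k : Fin d → ℤ, f (x + fun i => (k i : ℝ)) = f x

/-- Joint smoothness of a time-dependent function on `I × ℝ^d`. -/
def Sm {d : ℕ} {E : Type*} [NormedAddCommGroup E] [NormedSpace ℝ E] (I : Set ℝ)
    (G : ℝ → (Fin d → ℝ) → E) : Prop :=
  ContDiffOn ℝ (⊤ : ℕ∞) (fun p : ℝ × (Fin d → ℝ) => G p.1 p.2) (I ×ˢ Set.univ)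

set_option linter.unusedSectionVars false
section partA
variable {d : ℕ} {E : Type*} [NormedAddCommGroup E] [NormedSpace ℝ E]

theorem cell_compact : IsCompact (Set.Icc (0 : Fin d → ℝ) 1) := isCompact_Icc

theorem cont_intOn {F : (Fin d → ℝ) → E} (hF : Continuous F) :
    IntegrableOn F (Set.Icc (0 : Fin d → ℝ) 1) :=
  hF.continuousOn.integrableOn_compact isCompact_Icc

theorem integral_partial_eq_zero [CompleteSpace E] (F : (Fin d → ℝ) → E) (hF : ContDiff ℝ 1 F)
    (hper : ∀ x : Fin d → ℝ, ∀ k : Fin d → ℤ, F (x + fun i => (k i : ℝ)) = F x) (i : Fin d) :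
    ∫ x in Set.Icc (0 : Fin d → ℝ) 1, fderiv ℝ F x (Pi.single i 1) = 0 := by
  obtain ⟨n, rfl⟩ : ∃ n, d = n + 1 := ⟨d - 1, by have := i.2; omega⟩
  classical
  have hc : Continuous (fun x => fderiv ℝ F x (Pi.single i 1)) :=
    (hF.continuous_fderiv (by norm_num)).clm_apply continuous_const
  have key := integral_divergence_of_hasFDerivAt_off_countable' (0 : Fin (n+1) → ℝ) 1
    (by intro i; simp)
    (fun j => if j = i then F else 0)
    (fun j => if j = i then fderiv ℝ F else 0) ∅ Set.countable_empty
    (by intro j; by_cases h : j = i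
        · simp only [h, if_true]; exact hF.continuous.continuousOn
        · simp only [h, if_false]; exact continuousOn_const)
    (by
      intro x _ j
      by_cases h : j = i
      · simp only [h, if_true]
        exact (hF.differentiable (by norm_num) x).hasFDerivAt
      · simp only [h, if_false]
        exact hasFDerivAt_const _ _)
    (by
      have : (fun x => ∑ j, (if j = i then fderiv ℝ F else 0) x (Pi.single j (1:ℝ)))
          = (fun x => fderiv ℝ F x (Pi.single i 1)) := by
        funext x
        rw [Finset.sum_eq_single i]
        · simp
        · intro j _ hj; simp [hj]
        · simp
      rw [this]
      exact cont_intOn hc)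
  have e1 : (fun x => ∑ j, (if j = i then fderiv ℝ F else 0) x (Pi.single j (1:ℝ)))
          = (fun x => fderiv ℝ F x (Pi.single i 1)) := by
    funext x
    rw [Finset.sum_eq_single i]
    · simp
    · intro j _ hj; simp [hj]
    · simp
  rw [e1] at key
  rw [key]
  apply Finset.sum_eq_zero
  intro j _
  by_cases h : j = i
  · simp only [h, if_true]
    rw [sub_eq_zero]
    congr 1
    funext x
    have := hper (i.insertNth (0:ℝ) x) (Pi.single i 1)
    rw [Pi.zero_apply, Pi.one_apply, ← this]
    congr 1
    funext l
    refine Fin.succAboveCases i ?_ (fun m => ?_) l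
    · simp
    · simp [Fin.succAbove_ne]
  · simp [h]

theorem Sm.mono {I J : Set ℝ} {G : ℝ → (Fin d → ℝ) → E} (h : Sm I G) (hJ : J ⊆ I) : Sm J G :=
  ContDiffOn.mono h (Set.prod_mono hJ subset_rfl)

theorem isOpen_strip {I : Set ℝ} (hI : IsOpen I) : IsOpen (I ×ˢ (Set.univ : Set (Fin d → ℝ))) :=
  hI.prod isOpen_univ

theorem Sm.contDiffAt {I : Set ℝ} (hI : IsOpen I) {G : ℝ → (Fin d → ℝ) → E} (h : Sm I G)
    {t : ℝ} (ht : t ∈ I) (x : Fin d → ℝ) :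
    ContDiffAt ℝ (⊤ : ℕ∞) (fun p : ℝ × (Fin d → ℝ) => G p.1 p.2) (t, x) :=
  ContDiffOn.contDiffAt h ((isOpen_strip hI).mem_nhds (Set.mk_mem_prod ht trivial))

theorem Sm.space {I : Set ℝ} {G : ℝ → (Fin d → ℝ) → E} (h : Sm I G)
    {t : ℝ} (ht : t ∈ I) : ContDiff ℝ (⊤ : ℕ∞) (G t) := by
  rw [← contDiffOn_univ]
  have : ContDiffOn ℝ (⊤ : ℕ∞) (fun x : Fin d → ℝ => ((t, x) : ℝ × (Fin d → ℝ))) Set.univ :=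
    (contDiff_const.prodMk contDiff_id).contDiffOn
  exact ContDiffOn.comp (g := fun p : ℝ × (Fin d → ℝ) => G p.1 p.2) h this
    (fun x _ => ⟨ht, trivial⟩)

theorem Sm.hasDeriv {I : Set ℝ} (hI : IsOpen I) {G : ℝ → (Fin d → ℝ) → E} (h : Sm I G)
    {t : ℝ} (ht : t ∈ I) (x : Fin d → ℝ) :
    HasDerivAt (fun r => G r x)
      (fderiv ℝ (fun p : ℝ × (Fin d → ℝ) => G p.1 p.2) (t, x) (1, 0)) t := by
  have h1 := ((h.contDiffAt hI ht x).differentiableAt (by simp)).hasFDerivAt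
  have h2 : HasDerivAt (fun r : ℝ => ((r, x) : ℝ × (Fin d → ℝ))) (1, 0) t :=
    (hasDerivAt_id t).prodMk (hasDerivAt_const t x)
  exact h1.comp_hasDerivAt t h2

theorem Sm.fderiv_apply {I : Set ℝ} (hI : IsOpen I) {G : ℝ → (Fin d → ℝ) → E} (h : Sm I G)
    {t : ℝ} (ht : t ∈ I) (x : Fin d → ℝ) (v : Fin d → ℝ) :
    fderiv ℝ (G t) x v
      = fderiv ℝ (fun p : ℝ × (Fin d → ℝ) => G p.1 p.2) (t, x) (0, v) := by
  have h1 := ((h.contDiffAt hI ht x).differentiableAt (by simp)).hasFDerivAt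
  have h2 : HasFDerivAt (fun y : Fin d → ℝ => ((t, y) : ℝ × (Fin d → ℝ)))
     (ContinuousLinearMap.inr ℝ ℝ (Fin d → ℝ)) x := hasFDerivAt_prodMk_right t x
  have h3 : HasFDerivAt (G t) _ x := h1.comp x h2
  rw [h3.fderiv]
  rfl

theorem Sm.fd {I : Set ℝ} (hI : IsOpen I) {G : ℝ → (Fin d → ℝ) → E} (h : Sm I G)
    (v : ℝ × (Fin d → ℝ)) :
    Sm I (fun t x => fderiv ℝ (fun p : ℝ × (Fin d → ℝ) => G p.1 p.2) (t, x) v) := by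
  have h1 : ContDiffOn ℝ (⊤ : ℕ∞) (fderiv ℝ (fun p : ℝ × (Fin d → ℝ) => G p.1 p.2))
      (I ×ˢ Set.univ) := ((contDiffOn_infty_iff_fderiv_of_isOpen (isOpen_strip hI)).1 h).2
  exact h1.clm_apply contDiffOn_const

theorem Sm.congr {I : Set ℝ} {G H : ℝ → (Fin d → ℝ) → E} (h : Sm I G)
    (e : ∀ t ∈ I, ∀ x, H t x = G t x) : Sm I H :=
  ContDiffOn.congr h (fun p hp => e p.1 hp.1 p.2)

theorem Sm.dt {I : Set ℝ} (hI : IsOpen I) {G : ℝ → (Fin d → ℝ) → E} (h : Sm I G) :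
    Sm I (fun t x => deriv (fun r => G r x) t) :=
  (h.fd hI (1, 0)).congr (fun _ ht x => (h.hasDeriv hI ht x).deriv)

theorem Sm.hasDeriv' {I : Set ℝ} (hI : IsOpen I) {G : ℝ → (Fin d → ℝ) → E} (h : Sm I G)
    {t : ℝ} (ht : t ∈ I) (x : Fin d → ℝ) :
    HasDerivAt (fun r => G r x) (deriv (fun r => G r x) t) t := by
  have := h.hasDeriv hI ht x
  rwa [this.deriv]

theorem Sm.dx {I : Set ℝ} (hI : IsOpen I) {G : ℝ → (Fin d → ℝ) → ℝ} (h : Sm I G) (i : Fin d) :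
    Sm I (fun t x => pd d i (G t) x) :=
  (h.fd hI (0, Pi.single i 1)).congr (fun _ ht x => h.fderiv_apply hI ht x _)

theorem Sm.param {I : Set ℝ} (hI : IsOpen I) {G : ℝ → (Fin d → ℝ) → E} (h : Sm I G)
    {t : ℝ} (ht : t ∈ I) :
    HasDerivAt (fun r => ∫ x in Set.Icc (0 : Fin d → ℝ) 1, G r x)
      (∫ x in Set.Icc (0 : Fin d → ℝ) 1, deriv (fun r => G r x) t) t := by
  obtain ⟨ε, hε, hsub⟩ := Metric.nhds_basis_closedBall.mem_iff.1 (hI.mem_nhds ht)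
  have hK : IsCompact (Metric.closedBall t ε ×ˢ Set.Icc (0 : Fin d → ℝ) 1) :=
    (isCompact_closedBall t ε).prod isCompact_Icc
  have hcont := (h.dt hI).continuousOn
  obtain ⟨C, hC⟩ := hK.exists_bound_of_continuousOn
    (hcont.mono (Set.prod_mono hsub (Set.subset_univ _)))
  refine (hasDerivAt_integral_of_dominated_loc_of_deriv_le (bound := fun _ => C)
    (F' := fun t x => deriv (fun r => G r x) t)
    (Metric.closedBall_mem_nhds t hε) ?_ ?_ ?_ ?_ ?_ ?_).2
  · filter_upwards [hI.mem_nhds ht] with r hr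
    exact ((h.space hr).continuous).aestronglyMeasurable
  · exact cont_intOn (h.space ht).continuous
  · exact (((h.dt hI).space ht).continuous).aestronglyMeasurable
  · refine (ae_restrict_iff' measurableSet_Icc).2 (ae_of_all _ fun x hx r hr => ?_)
    exact hC (r, x) ⟨hr, hx⟩
  · exact cont_intOn continuous_const
  · exact ae_of_all _ fun x r hr => h.hasDeriv' hI (hsub hr) x

end partA

section partB
variable {d : ℕ}

theorem PeriodicIn.pd' {f : (Fin d → ℝ) → ℝ} (hf : PeriodicIn d f) (i : Fin d) :
    PeriodicIn d (pd d i f) := by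
  intro x k
  have : (fun y => f (y + fun i => (k i : ℝ))) = f := funext fun y => hf y k
  unfold pd
  conv_rhs => rw [← this]
  rw [fderiv_comp_add_right]

theorem contDiff_pd {f : (Fin d → ℝ) → ℝ} (hf : ContDiff ℝ (⊤ : ℕ∞) f) (i : Fin d) :
    ContDiff ℝ (⊤ : ℕ∞) (fun x => pd d i f x) :=
  ((contDiff_infty_iff_fderiv.1 hf).2).clm_apply contDiff_const

theorem ContDiff.dat {f : (Fin d → ℝ) → ℝ} (hf : ContDiff ℝ (⊤ : ℕ∞) f) (x : Fin d → ℝ) :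
    DifferentiableAt ℝ f x := hf.differentiable (by simp) x

theorem pd_mul {f g : (Fin d → ℝ) → ℝ} {x : Fin d → ℝ} (hf : DifferentiableAt ℝ f x)
    (hg : DifferentiableAt ℝ g x) (i : Fin d) :
    pd d i (fun y => f y * g y) x = f x * pd d i g x + g x * pd d i f x := by
  unfold pd
  rw [fderiv_fun_mul hf hg]
  simp

theorem pd_sub {f g : (Fin d → ℝ) → ℝ} {x : Fin d → ℝ} (hf : DifferentiableAt ℝ f x)
    (hg : DifferentiableAt ℝ g x) (i : Fin d) :
    pd d i (fun y => f y - g y) x = pd d i f x - pd d i g x := by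
  unfold pd
  rw [fderiv_fun_sub hf hg]
  simp

theorem pd_const_mul {f : (Fin d → ℝ) → ℝ} {x : Fin d → ℝ} (hf : DifferentiableAt ℝ f x)
    (c : ℝ) (i : Fin d) :
    pd d i (fun y => c * f y) x = c * pd d i f x := by
  unfold pd
  rw [fderiv_const_mul hf]
  simp

theorem integral_pd_zero {f : (Fin d → ℝ) → ℝ} (hf : ContDiff ℝ (⊤ : ℕ∞) f)
    (hp : PeriodicIn d f) (i : Fin d) :
    ∫ x in Set.Icc (0 : Fin d → ℝ) 1, pd d i f x = 0 :=
  integral_partial_eq_zero f (hf.of_le (by exact_mod_cast le_top)) hp i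

theorem integral_div_zero {V : Fin d → (Fin d → ℝ) → ℝ}
    (hf : ∀ i, ContDiff ℝ (⊤ : ℕ∞) (V i)) (hp : ∀ i, PeriodicIn d (V i)) :
    ∫ x in Set.Icc (0 : Fin d → ℝ) 1, ∑ i, pd d i (V i) x = 0 := by
  rw [integral_finsetSum _ (fun i _ => cont_intOn (contDiff_pd (hf i) i).continuous)]
  exact Finset.sum_eq_zero fun i _ => integral_pd_zero (hf i) (hp i) i

/-- Weak form of the advection-diffusion operator. -/
theorem weak_form {φ ψ : (Fin d → ℝ) → ℝ} {v : Fin d → (Fin d → ℝ) → ℝ} (ν : ℝ)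
    (hφ : ContDiff ℝ (⊤ : ℕ∞) φ) (hψ : ContDiff ℝ (⊤ : ℕ∞) ψ)
    (hv : ∀ i, ContDiff ℝ (⊤ : ℕ∞) (v i))
    (pφ : PeriodicIn d φ) (pψ : PeriodicIn d ψ) (pv : ∀ i, PeriodicIn d (v i))
    (hdiv : ∀ x, ∑ i, pd d i (v i) x = 0) :
    ∫ x in Set.Icc (0 : Fin d → ℝ) 1, ψ x * (ν * lap d φ x - ∑ i, v i x * pd d i φ x)
     = ∫ x in Set.Icc (0 : Fin d → ℝ) 1, φ x * (ν * lap d ψ x + ∑ i, v i x * pd d i ψ x) := by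
  have hlap : ∀ {f : (Fin d → ℝ) → ℝ}, ContDiff ℝ (⊤ : ℕ∞) f → Continuous (lap d f) := by
    intro f hf
    exact continuous_finsetSum _ fun i _ => (contDiff_pd (contDiff_pd hf i) i).continuous
  have hpdc : ∀ {f : (Fin d → ℝ) → ℝ}, ContDiff ℝ (⊤ : ℕ∞) f → ∀ i, Continuous (pd d i f) :=
    fun hf i => (contDiff_pd hf i).continuous
  set V : Fin d → (Fin d → ℝ) → ℝ := fun i x =>
    ν * (ψ x * pd d i φ x - φ x * pd d i ψ x) - v i x * (φ x * ψ x) with hV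
  have hVs : ∀ i, ContDiff ℝ (⊤ : ℕ∞) (V i) := fun i =>
    (contDiff_const.mul ((hψ.mul (contDiff_pd hφ i)).sub (hφ.mul (contDiff_pd hψ i)))).sub
      ((hv i).mul (hφ.mul hψ))
  have hVp : ∀ i, PeriodicIn d (V i) := by
    intro i x k
    simp only [hV]
    rw [pφ x k, pψ x k, pv i x k, pφ.pd' i x k, pψ.pd' i x k]
  have key := integral_div_zero hVs hVp
  have hcv : ∀ i, Continuous (v i) := fun i => (hv i).continuous
  rw [← sub_eq_zero, ← integral_sub, ← key]
  · congr 1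
    funext x
    have e : ∀ i, pd d i (V i) x = ν * (ψ x * pd d i (fun y => pd d i φ y) x
        - φ x * pd d i (fun y => pd d i ψ y) x)
        - (v i x * (φ x * pd d i ψ x + ψ x * pd d i φ x) + φ x * ψ x * pd d i (v i) x) := by
      intro i
      simp only [hV]
      have d1 := contDiff_pd hφ i
      have d2 := contDiff_pd hψ i
      rw [pd_sub ((contDiff_const.mul ((hψ.mul d1).sub (hφ.mul d2))).dat x)
          (((hv i).mul (hφ.mul hψ)).dat x),
        pd_const_mul (((hψ.mul d1).sub (hφ.mul d2)).dat x),
        pd_sub ((hψ.mul d1).dat x) ((hφ.mul d2).dat x),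
        pd_mul (hψ.dat x) (d1.dat x), pd_mul (hφ.dat x) (d2.dat x),
        pd_mul ((hv i).dat x) ((hφ.mul hψ).dat x), pd_mul (hφ.dat x) (hψ.dat x)]
      ring
    simp only [e]
    rw [Finset.sum_sub_distrib, Finset.sum_add_distrib, ← Finset.mul_sum (a := φ x * ψ x), hdiv x]
    simp only [lap, Finset.mul_sum, mul_add, mul_sub, Finset.sum_add_distrib,
      Finset.sum_sub_distrib]
    have c1 : ∀ i, ψ x * (v i x * pd d i φ x) = v i x * (ψ x * pd d i φ x) := fun i => by ring
    have c2 : ∀ i, φ x * (v i x * pd d i ψ x) = v i x * (φ x * pd d i ψ x) := fun i => by ring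
    have c3 : ∀ i, ψ x * (ν * pd d i (fun y => pd d i φ y) x)
      = ν * (ψ x * pd d i (fun y => pd d i φ y) x) := fun i => by ring
    have c4 : ∀ i, φ x * (ν * pd d i (fun y => pd d i ψ y) x)
      = ν * (φ x * pd d i (fun y => pd d i ψ y) x) := fun i => by ring
    simp only [c1, c2, c3, c4]
    ring
  · exact cont_intOn (hψ.continuous.mul ((continuous_const.mul (hlap hφ)).sub
      (continuous_finsetSum _ fun i _ => (hcv i).mul (hpdc hφ i))))
  · exact cont_intOn (hφ.continuous.mul ((continuous_const.mul (hlap hψ)).add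
      (continuous_finsetSum _ fun i _ => (hcv i).mul (hpdc hψ i))))

theorem integral_mul_lap {φ : (Fin d → ℝ) → ℝ} (hφ : ContDiff ℝ (⊤ : ℕ∞) φ)
    (pφ : PeriodicIn d φ) :
    ∫ x in Set.Icc (0 : Fin d → ℝ) 1, φ x * lap d φ x ≤ 0 := by
  have hpdc : ∀ i, Continuous (pd d i φ) := fun i => (contDiff_pd hφ i).continuous
  have key := integral_div_zero (V := fun i x => φ x * pd d i φ x)
    (fun i => hφ.mul (contDiff_pd hφ i))
    (fun i x k => by simp only []; rw [pφ x k, pφ.pd' i x k])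
  have e : ∀ x, φ x * lap d φ x
      = (∑ i, pd d i (fun x => φ x * pd d i φ x) x) - ∑ i, pd d i φ x * pd d i φ x := by
    intro x
    rw [← Finset.sum_sub_distrib, lap, Finset.mul_sum]
    refine Finset.sum_congr rfl fun i _ => ?_
    rw [pd_mul (hφ.dat x) ((contDiff_pd hφ i).dat x)]
    ring
  simp only [e]
  rw [integral_sub, key, zero_sub, neg_nonpos]
  · exact integral_nonneg fun x => Finset.sum_nonneg fun i _ => mul_self_nonneg _
  · exact cont_intOn (continuous_finsetSum _ fun i _ =>
      (contDiff_pd (hφ.mul (contDiff_pd hφ i)) i).continuous)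
  · exact cont_intOn (continuous_finsetSum _ fun i _ => (hpdc i).mul (hpdc i))

/-- Squared `L²` norm. -/
noncomputable def En (d : ℕ) (f : (Fin d → ℝ) → ℝ) : ℝ :=
  ∫ x in Set.Icc (0 : Fin d → ℝ) 1, (f x) ^ 2

theorem En_nonneg (f : (Fin d → ℝ) → ℝ) : 0 ≤ En d f := integral_nonneg fun _ => sq_nonneg _

/-- Solutions of the advection-diffusion equation on an open time set. -/
structure IsSol (d : ℕ) (ν : ℝ) (v : ℝ → (Fin d → ℝ) → (Fin d → ℝ)) (I : Set ℝ)
    (θ : ℝ → (Fin d → ℝ) → ℝ) : Prop where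
  sm : Sm I θ
  per : ∀ t ∈ I, PeriodicIn d (θ t)
  eq : ∀ t ∈ I, ∀ x, deriv (fun r => θ r x) t
    = ν * lap d (θ t) x - ∑ i, v t x i * pd d i (θ t) x

/-- Admissible drifts. -/
structure IsDrift (d : ℕ) (v : ℝ → (Fin d → ℝ) → (Fin d → ℝ)) (I : Set ℝ) : Prop where
  sm : ∀ t ∈ I, ∀ i, ContDiff ℝ (⊤ : ℕ∞) (fun x => v t x i)
  per : ∀ t ∈ I, ∀ i, PeriodicIn d (fun x => v t x i)
  div : ∀ t ∈ I, ∀ x, ∑ i, pd d i (fun y => v t y i) x = 0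

variable {ν : ℝ} {v : ℝ → (Fin d → ℝ) → (Fin d → ℝ)} {I : Set ℝ} {θ : ℝ → (Fin d → ℝ) → ℝ}

theorem IsSol.weak_deriv (hI : IsOpen I) (h : IsSol d ν v I θ) (hv : IsDrift d v I)
    {ψ : (Fin d → ℝ) → ℝ} (hψ : ContDiff ℝ (⊤ : ℕ∞) ψ) (pψ : PeriodicIn d ψ) {t : ℝ}
    (ht : t ∈ I) :
    HasDerivAt (fun r => ∫ x in Set.Icc (0 : Fin d → ℝ) 1, ψ x * θ r x)
      (∫ x in Set.Icc (0 : Fin d → ℝ) 1,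
        θ t x * (ν * lap d ψ x + ∑ i, v t x i * pd d i ψ x)) t := by
  have hs : Sm I (fun r x => ψ x * θ r x) :=
    ContDiffOn.mul (hψ.comp contDiff_snd).contDiffOn h.sm
  have := hs.param hI ht
  rw [← weak_form ν (h.sm.space ht) hψ (hv.sm t ht) (h.per t ht) pψ (hv.per t ht) (hv.div t ht)]
  have e : ∀ x, ψ x * (ν * lap d (θ t) x - ∑ i, v t x i * pd d i (θ t) x)
      = deriv (fun r => ψ x * θ r x) t := by
    intro x
    rw [((h.sm.hasDeriv' hI ht x).const_mul (ψ x)).deriv, h.eq t ht x]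
  simp only [e]
  exact this

theorem IsSol.energy_deriv (hI : IsOpen I) (hν : 0 ≤ ν) (h : IsSol d ν v I θ)
    (hv : IsDrift d v I) {t : ℝ} (ht : t ∈ I) :
    ∃ D ≤ 0, HasDerivAt (fun r => En d (θ r)) D t := by
  have hs : Sm I (fun r x => (θ r x) ^ 2) := ContDiffOn.pow h.sm 2
  refine ⟨_, ?_, hs.param hI ht⟩
  have hθ := h.sm.space ht
  have hlap : Continuous (lap d (θ t)) :=
    continuous_finsetSum _ fun i _ => (contDiff_pd (contDiff_pd hθ i) i).continuous
  have hcv : ∀ i, Continuous (fun x => v t x i) := fun i => (hv.sm t ht i).continuous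
  have hpdc : ∀ i, Continuous (pd d i (θ t)) := fun i => (contDiff_pd hθ i).continuous
  have w := weak_form ν hθ hθ (hv.sm t ht) (h.per t ht) (h.per t ht) (hv.per t ht) (hv.div t ht)
  have e1 : ∀ x, deriv (fun r => (θ r x) ^ 2) t
      = θ t x * (ν * lap d (θ t) x - ∑ i, v t x i * pd d i (θ t) x)
       + θ t x * (ν * lap d (θ t) x - ∑ i, v t x i * pd d i (θ t) x) := by
    intro x
    rw [((h.sm.hasDeriv' hI ht x).fun_pow 2).deriv, h.eq t ht x]
    simp only [Nat.cast_ofNat]; ring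
  have i1 : IntegrableOn (fun x => θ t x * (ν * lap d (θ t) x - ∑ i, v t x i * pd d i (θ t) x))
      (Set.Icc (0 : Fin d → ℝ) 1) := cont_intOn (hθ.continuous.mul ((continuous_const (y := ν).mul hlap).sub
      (continuous_finsetSum Finset.univ fun i _ => (hcv i).mul (hpdc i))))
  have i2 : IntegrableOn (fun x => θ t x * (ν * lap d (θ t) x + ∑ i, v t x i * pd d i (θ t) x))
      (Set.Icc (0 : Fin d → ℝ) 1) := cont_intOn (hθ.continuous.mul ((continuous_const (y := ν).mul hlap).add
      (continuous_finsetSum Finset.univ fun i _ => (hcv i).mul (hpdc i))))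
  simp only [e1]
  rw [integral_add i1 i1]
  nth_rw 2 [w]
  rw [← integral_add i1 i2]
  have e2 : ∀ x, θ t x * (ν * lap d (θ t) x - ∑ i, v t x i * pd d i (θ t) x)
       + θ t x * (ν * lap d (θ t) x + ∑ i, v t x i * pd d i (θ t) x)
       = (2 * ν) * (θ t x * lap d (θ t) x) := fun x => by ring
  simp only [e2]
  rw [integral_const_mul]
  exact mul_nonpos_of_nonneg_of_nonpos (by positivity) (integral_mul_lap hθ (h.per t ht))

theorem IsSol.energy_anti (hI : IsOpen I) (hc : Convex ℝ I) (hν : 0 ≤ ν) (h : IsSol d ν v I θ)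
    (hv : IsDrift d v I) : AntitoneOn (fun r => En d (θ r)) I := by
  refine antitoneOn_of_deriv_nonpos hc ?_ ?_ ?_
  · intro t ht
    obtain ⟨D, _, hD⟩ := h.energy_deriv hI hν hv ht
    exact hD.continuousAt.continuousWithinAt
  · intro t ht
    obtain ⟨D, _, hD⟩ := h.energy_deriv hI hν hv (interior_subset ht)
    exact hD.differentiableAt.differentiableWithinAt
  · intro t ht
    obtain ⟨D, hD0, hD⟩ := h.energy_deriv hI hν hv (interior_subset ht)
    rw [hD.deriv]; exact hD0

theorem lap_sub {f g : (Fin d → ℝ) → ℝ} (hf : ContDiff ℝ (⊤ : ℕ∞) f)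
    (hg : ContDiff ℝ (⊤ : ℕ∞) g) (x : Fin d → ℝ) :
    lap d (fun y => f y - g y) x = lap d f x - lap d g x := by
  unfold lap
  rw [← Finset.sum_sub_distrib]
  refine Finset.sum_congr rfl fun i _ => ?_
  have : (fun y => pd d i (fun y => f y - g y) y) = fun y => pd d i f y - pd d i g y :=
    funext fun y => pd_sub (hf.dat y) (hg.dat y) i
  rw [this, pd_sub ((contDiff_pd hf i).dat x) ((contDiff_pd hg i).dat x)]

theorem IsSol.sub (hI : IsOpen I) (h : IsSol d ν v I θ) {φ : ℝ → (Fin d → ℝ) → ℝ}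
    (h' : IsSol d ν v I φ) : IsSol d ν v I (fun t x => θ t x - φ t x) where
  sm := ContDiffOn.sub h.sm h'.sm
  per := by
    intro t ht x k
    simp only []
    rw [h.per t ht x k, h'.per t ht x k]
  eq := by
    intro t ht x
    rw [((h.sm.hasDeriv' hI ht x).fun_sub (h'.sm.hasDeriv' hI ht x)).deriv, h.eq t ht x, h'.eq t ht x,
      lap_sub (h.sm.space ht) (h'.sm.space ht)]
    have : ∀ i, pd d i (fun x => θ t x - φ t x) x = pd d i (θ t) x - pd d i (φ t) x := fun i =>
      pd_sub ((h.sm.space ht).dat x) ((h'.sm.space ht).dat x) i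
    simp only [this, mul_sub, Finset.sum_sub_distrib]
    ring

end partB

section partC
variable {d : ℕ}

/-- Frequency weight. -/
noncomputable def wt (k : Fin d → ℤ) : ℝ := 1 + ‖k‖

theorem one_le_wt (k : Fin d → ℤ) : 1 ≤ wt k := by unfold wt; linarith [norm_nonneg k]

theorem wt_pos (k : Fin d → ℤ) : 0 < wt k := lt_of_lt_of_le one_pos (one_le_wt k)

theorem wt_mul (k j : Fin d → ℤ) : wt k ≤ wt (k - j) * wt j := by
  unfold wt
  have : ‖k‖ ≤ ‖k - j‖ + ‖j‖ := by
    calc ‖k‖ = ‖(k - j) + j‖ := by rw [sub_add_cancel]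
      _ ≤ _ := norm_add_le _ _
  nlinarith [norm_nonneg (k - j), norm_nonneg j]

theorem abs_le_wt (k : Fin d → ℤ) (i : Fin d) : |(k i : ℝ)| ≤ wt k := by
  have := norm_le_pi_norm k i
  rw [Int.norm_eq_abs] at this
  unfold wt; linarith

theorem summable_int_aux : Summable (fun n : ℤ => ((1 + |(n:ℝ)|) ^ 2)⁻¹) := by
  have h : Summable (fun n : ℕ => ((1 + |(n:ℝ)|) ^ 2)⁻¹) := by
    have := (summable_nat_add_iff 1).2 (Real.summable_nat_pow_inv.2 (one_lt_two))
    refine this.congr fun n => ?_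
    rw [abs_of_nonneg (by positivity)]
    push_cast
    rw [add_comm]
  refine Summable.of_nat_of_neg ?_ ?_
  · exact_mod_cast h
  · simpa using h

theorem summable_prod_aux (d : ℕ) :
    Summable (fun k : Fin d → ℤ => ∏ i, ((1 + |(k i:ℝ)|) ^ 2)⁻¹) := by
  induction d with
  | zero => exact Summable.of_finite
  | succ n ih =>
    rw [← (Fin.consEquiv (fun _ => ℤ)).summable_iff]
    have := summable_int_aux.mul_of_nonneg ih (fun _ => by positivity)
      (fun _ => Finset.prod_nonneg fun _ _ => by positivity)
    refine this.congr fun p => ?_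
    simp [Fin.prod_univ_succ, Fin.consEquiv, mul_comm]

theorem summable_wt : Summable (fun k : Fin d → ℤ => (wt k ^ (2 * d))⁻¹) := by
  refine Summable.of_nonneg_of_le (fun k => inv_nonneg.2 (pow_nonneg (wt_pos k).le _)) (fun k => ?_)
    (summable_prod_aux d)
  rw [Finset.prod_inv_distrib]
  refine inv_anti₀ (Finset.prod_pos fun i _ => by positivity) ?_
  calc ∏ i, (1 + |(k i:ℝ)|) ^ 2 ≤ ∏ _i : Fin d, wt k ^ 2 := by
        refine Finset.prod_le_prod (fun i _ => by positivity) fun i _ => ?_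
        have : 1 + |(k i:ℝ)| ≤ wt k := by
          have := norm_le_pi_norm k i
          rw [Int.norm_eq_abs] at this
          unfold wt; linarith
        gcongr
    _ = wt k ^ (2 * d) := by simp [pow_mul]

/-- Sum of the inverse weights. -/
noncomputable def Sw (d : ℕ) : ℝ := ∑' k : Fin d → ℤ, (wt k ^ (2 * d))⁻¹

theorem Sw_nonneg : 0 ≤ Sw d := tsum_nonneg fun k => inv_nonneg.2 (pow_nonneg (wt_pos k).le _)

/-- Convolution of coefficient families. -/
noncomputable def cv (a b : (Fin d → ℤ) → ℂ) (k : Fin d → ℤ) : ℂ := ∑' j, a (k - j) * b j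

theorem cv_term_le {a b : (Fin d → ℤ) → ℂ} {A B : ℝ} {m : ℕ}
    (ha : ∀ k, ‖a k‖ * wt k ^ (m + 2 * d) ≤ A) (hb : ∀ k, ‖b k‖ * wt k ^ m ≤ B)
    (k j : Fin d → ℤ) :
    ‖a (k - j) * b j‖ * wt k ^ m ≤ A * B * (wt (k - j) ^ (2 * d))⁻¹ := by
  have h1 : wt k ^ m ≤ wt (k - j) ^ m * wt j ^ m := by
    rw [← mul_pow]; exact pow_le_pow_left₀ (wt_pos k).le (wt_mul k j) m
  have p1 := wt_pos (k - j)
  have p2 := wt_pos j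
  have h2 : ‖a (k - j)‖ * wt (k - j) ^ m ≤ A * (wt (k - j) ^ (2 * d))⁻¹ := by
    rw [← div_eq_mul_inv, le_div_iff₀ (by positivity), mul_assoc, ← pow_add]; exact ha _
  have hA : 0 ≤ A * (wt (k - j) ^ (2 * d))⁻¹ := le_trans (by positivity) h2
  calc ‖a (k - j) * b j‖ * wt k ^ m ≤ ‖a (k - j)‖ * ‖b j‖ * (wt (k - j) ^ m * wt j ^ m) := by
        rw [norm_mul]; gcongr
    _ = (‖a (k - j)‖ * wt (k - j) ^ m) * (‖b j‖ * wt j ^ m) := by ring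
    _ ≤ (A * (wt (k - j) ^ (2 * d))⁻¹) * B := by
        gcongr
        exact hb j
    _ = _ := by ring

theorem cv_term_le' {a b : (Fin d → ℤ) → ℂ} {A B : ℝ} {m : ℕ}
    (ha : ∀ k, ‖a k‖ * wt k ^ (m + 2 * d) ≤ A) (hb : ∀ k, ‖b k‖ * wt k ^ m ≤ B)
    (k j : Fin d → ℤ) :
    ‖a (k - j) * b j‖ ≤ A * B * (wt (k - j) ^ (2 * d))⁻¹ := by
  refine le_trans ?_ (cv_term_le ha hb k j)
  exact le_mul_of_one_le_right (norm_nonneg _) (one_le_pow₀ (one_le_wt k))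

theorem summable_wt_sub (k : Fin d → ℤ) :
    Summable (fun j : Fin d → ℤ => (wt (k - j) ^ (2 * d))⁻¹) :=
  (Equiv.subLeft k).summable_iff.2 summable_wt

theorem tsum_wt_sub (k : Fin d → ℤ) :
    ∑' j : Fin d → ℤ, (wt (k - j) ^ (2 * d))⁻¹ = Sw d :=
  (Equiv.subLeft k).tsum_eq (fun k : Fin d → ℤ => (wt k ^ (2 * d))⁻¹)

theorem cv_summable {a b : (Fin d → ℤ) → ℂ} {A B : ℝ} {m : ℕ}
    (ha : ∀ k, ‖a k‖ * wt k ^ (m + 2 * d) ≤ A) (hb : ∀ k, ‖b k‖ * wt k ^ m ≤ B)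
    (k : Fin d → ℤ) : Summable (fun j => a (k - j) * b j) :=
  Summable.of_norm_bounded ((summable_wt_sub k).mul_left (A * B)) (cv_term_le' ha hb k)

theorem cv_bound {a b : (Fin d → ℤ) → ℂ} {A B : ℝ} {m : ℕ}
    (ha : ∀ k, ‖a k‖ * wt k ^ (m + 2 * d) ≤ A) (hb : ∀ k, ‖b k‖ * wt k ^ m ≤ B)
    (k : Fin d → ℤ) : ‖cv a b k‖ * wt k ^ m ≤ A * B * Sw d := by
  have p := pow_pos (wt_pos k) m
  rw [← le_div_iff₀ p]
  have h := tsum_of_norm_bounded (f := fun j => a (k - j) * b j)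
    (((summable_wt_sub k).mul_left (A * B / wt k ^ m)).hasSum) (fun j => by
      have := cv_term_le ha hb k j
      rw [← le_div_iff₀ p] at this
      refine this.trans (le_of_eq ?_)
      ring)
  refine h.trans (le_of_eq ?_)
  rw [tsum_mul_left, tsum_wt_sub]
  ring

/-- Rapidly decaying continuous coefficient families on a time set. -/
structure RD (I : Set ℝ) (c : ℝ → (Fin d → ℤ) → ℂ) : Prop where
  cont : ∀ k, ContinuousOn (fun t => c t k) I
  dec : ∀ m : ℕ, ∃ C : ℝ, 0 ≤ C ∧ ∀ t ∈ I, ∀ k, ‖c t k‖ * wt k ^ m ≤ C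

variable {I : Set ℝ} {a b c : ℝ → (Fin d → ℤ) → ℂ}

theorem RD.mono {J : Set ℝ} (h : RD I c) (hJ : J ⊆ I) : RD J c where
  cont k := (h.cont k).mono hJ
  dec m := by
    obtain ⟨C, h0, hC⟩ := h.dec m
    exact ⟨C, h0, fun t ht => hC t (hJ ht)⟩

/-- Uniform summable bound. -/
theorem RD.bound (h : RD I c) : ∃ C : ℝ, 0 ≤ C ∧ ∀ t ∈ I, ∀ k, ‖c t k‖ ≤ C * (wt k ^ (2 * d))⁻¹ := by
  obtain ⟨C, h0, hC⟩ := h.dec (2 * d)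
  refine ⟨C, h0, fun t ht k => ?_⟩
  rw [← div_eq_mul_inv, le_div_iff₀ (pow_pos (wt_pos k) _)]
  exact hC t ht k

theorem RD.summable_norm (h : RD I c) {t : ℝ} (ht : t ∈ I) : Summable (fun k => ‖c t k‖) := by
  obtain ⟨C, h0, hC⟩ := h.bound
  exact Summable.of_nonneg_of_le (fun _ => norm_nonneg _) (hC t ht) (summable_wt.mul_left C)

theorem RD.add (ha : RD I a) (hb : RD I b) : RD I (fun t k => a t k + b t k) where
  cont k := (ha.cont k).add (hb.cont k)
  dec m := by
    obtain ⟨A, hA0, hA⟩ := ha.dec m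
    obtain ⟨B, hB0, hB⟩ := hb.dec m
    refine ⟨A + B, by positivity, fun t ht k => ?_⟩
    have p := pow_pos (wt_pos k) m
    calc ‖a t k + b t k‖ * wt k ^ m ≤ (‖a t k‖ + ‖b t k‖) * wt k ^ m := by
          gcongr; exact norm_add_le _ _
      _ = ‖a t k‖ * wt k ^ m + ‖b t k‖ * wt k ^ m := by ring
      _ ≤ A + B := add_le_add (hA t ht k) (hB t ht k)

theorem RD.mulk (h : RD I c) {p : (Fin d → ℤ) → ℂ} {C : ℝ} {q : ℕ}
    (hp : ∀ k, ‖p k‖ ≤ C * wt k ^ q) : RD I (fun t k => p k * c t k) where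
  cont k := continuousOn_const.mul (h.cont k)
  dec m := by
    obtain ⟨A, hA0, hA⟩ := h.dec (m + q)
    have hC : 0 ≤ C := by
      have := (norm_nonneg _).trans (hp 0)
      exact nonneg_of_mul_nonneg_left this (pow_pos (wt_pos _) _)
    refine ⟨C * A, by positivity, fun t ht k => ?_⟩
    have pw := wt_pos k
    calc ‖p k * c t k‖ * wt k ^ m ≤ (C * wt k ^ q) * ‖c t k‖ * wt k ^ m := by
          rw [norm_mul]; gcongr; exact hp k
      _ = C * (‖c t k‖ * wt k ^ (m + q)) := by rw [pow_add]; ring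
      _ ≤ C * A := by gcongr; exact hA t ht k

theorem RD.zero : RD I (fun _ _ => 0 : ℝ → (Fin d → ℤ) → ℂ) where
  cont k := continuousOn_const
  dec m := ⟨0, le_rfl, fun t _ k => by simp⟩

theorem RD.cv (ha : RD I a) (hb : RD I b) : RD I (fun t => cv (a t) (b t)) where
  cont k := by
    obtain ⟨A, hA0, hA⟩ := ha.dec (0 + 2 * d)
    obtain ⟨B, hB0, hB⟩ := hb.dec 0
    refine continuousOn_tsum (u := fun j => A * B * (wt (k - j) ^ (2 * d))⁻¹) ?_
      ((summable_wt_sub k).mul_left (A * B)) ?_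
    · intro j; exact (ha.cont (k - j)).mul (hb.cont j)
    · intro j t ht; exact cv_term_le' (hA t ht) (hB t ht) k j
  dec m := by
    obtain ⟨A, hA0, hA⟩ := ha.dec (m + 2 * d)
    obtain ⟨B, hB0, hB⟩ := hb.dec m
    exact ⟨A * B * Sw d, mul_nonneg (by positivity) Sw_nonneg,
      fun t ht k => cv_bound (hA t ht) (hB t ht) k⟩

/-- `n` times differentiable rapidly decaying coefficient families. -/
def RDn : ℕ → Set ℝ → (ℝ → (Fin d → ℤ) → ℂ) → Prop
  | 0, I, c => RD I c
  | (n + 1), I, c => RD I c ∧ ∃ c' : ℝ → (Fin d → ℤ) → ℂ,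
      (∀ t ∈ I, ∀ k, HasDerivAt (fun r => c r k) (c' t k) t) ∧ RDn n I c'

theorem RDn.rd {n : ℕ} (h : RDn n I c) : RD I c := by
  cases n with
  | zero => exact h
  | succ n => exact h.1

theorem RDn.pred {n : ℕ} (h : RDn (n + 1) I c) : RDn n I c := by
  induction n generalizing c with
  | zero => exact h.1
  | succ n ih =>
    obtain ⟨h1, c', h2, h3⟩ := h
    exact ⟨h1, c', h2, ih h3⟩

theorem RDn.add {n : ℕ} (ha : RDn n I a) (hb : RDn n I b) : RDn n I (fun t k => a t k + b t k) := by
  induction n generalizing a b with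
  | zero => exact RD.add ha hb
  | succ n ih =>
    obtain ⟨h1, a', h2, h3⟩ := ha
    obtain ⟨g1, b', g2, g3⟩ := hb
    exact ⟨h1.add g1, _, fun t ht k => (h2 t ht k).add (g2 t ht k), ih h3 g3⟩

theorem RDn.mulk {n : ℕ} (h : RDn n I c) {p : (Fin d → ℤ) → ℂ} {C : ℝ} {q : ℕ}
    (hp : ∀ k, ‖p k‖ ≤ C * wt k ^ q) : RDn n I (fun t k => p k * c t k) := by
  induction n generalizing c with
  | zero => exact RD.mulk h hp
  | succ n ih =>
    obtain ⟨h1, a', h2, h3⟩ := h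
    exact ⟨h1.mulk hp, _, fun t ht k => (h2 t ht k).const_mul (p k), ih h3⟩

theorem RDn.zero {n : ℕ} : RDn n I (fun _ _ => 0 : ℝ → (Fin d → ℤ) → ℂ) := by
  induction n with
  | zero => exact RD.zero
  | succ n ih => exact ⟨RD.zero, _, fun t _ k => hasDerivAt_const t (0:ℂ), ih⟩

theorem RDn.sum {n : ℕ} {ι : Type*} (s : Finset ι) {f : ι → ℝ → (Fin d → ℤ) → ℂ}
    (h : ∀ i ∈ s, RDn n I (f i)) : RDn n I (fun t k => ∑ i ∈ s, f i t k) := by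
  classical
  induction s using Finset.induction_on with
  | empty => simpa using RDn.zero
  | insert i s hi ih =>
    simp only [Finset.sum_insert hi]
    exact (h i (Finset.mem_insert_self i s)).add
      (ih fun j hj => h j (Finset.mem_insert_of_mem hj))

theorem RDn.cv {n : ℕ} (hI : IsOpen I) (hI' : IsPreconnected I) (ha : RDn n I a)
    (hb : RDn n I b) : RDn n I (fun t => cv (a t) (b t)) := by
  induction n generalizing a b with
  | zero => exact RD.cv ha hb
  | succ n ih =>
    have ha' := ha.pred
    have hb' := hb.pred
    obtain ⟨h1, a', h2, h3⟩ := ha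
    obtain ⟨g1, b', g2, g3⟩ := hb
    refine ⟨h1.cv g1, _, ?_, (ih h3 hb').add (ih ha' g3)⟩
    intro t ht k
    obtain ⟨A, hA0, hA⟩ := h1.dec (0 + 2 * d)
    obtain ⟨B, hB0, hB⟩ := g1.dec 0
    obtain ⟨A', hA0', hA'⟩ := h3.rd.dec (0 + 2 * d)
    obtain ⟨B', hB0', hB'⟩ := g3.rd.dec 0
    have key := hasDerivAt_tsum_of_isPreconnected (𝕜 := ℝ)
      (g := fun (j : Fin d → ℤ) r => a r (k - j) * b r j)
      (g' := fun j r => a' r (k - j) * b r j + a r (k - j) * b' r j)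
      (u := fun j => A' * B * (wt (k - j) ^ (2 * d))⁻¹ + A * B' * (wt (k - j) ^ (2 * d))⁻¹)
      (((summable_wt_sub k).mul_left _).add ((summable_wt_sub k).mul_left _)) hI hI'
      (fun j r hr => (h2 r hr (k - j)).mul (g2 r hr j))
      (fun j r hr => (norm_add_le _ _).trans (add_le_add
        (cv_term_le' (hA' r hr) (hB r hr) k j) (cv_term_le' (hA r hr) (hB' r hr) k j)))
      ht (cv_summable (hA t ht) (hB t ht) k) ht
    rw [(cv_summable (hA' t ht) (hB t ht) k).tsum_add (cv_summable (hA t ht) (hB' t ht) k)] at key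
    exact key

/-- Fourier characters. -/
noncomputable def ek (k : Fin d → ℤ) (x : Fin d → ℝ) : ℂ :=
  Complex.exp (∑ i, (2 * π * Complex.I * k i) * (x i : ℂ))

theorem ek_norm (k : Fin d → ℤ) (x : Fin d → ℝ) : ‖ek k x‖ = 1 := by
  unfold ek
  have : (∑ i, (2 * π * Complex.I * k i) * (x i : ℂ))
      = ((∑ i, 2 * π * k i * x i : ℝ) : ℂ) * Complex.I := by
    push_cast
    rw [Finset.sum_mul]
    refine Finset.sum_congr rfl fun i _ => by ring
  rw [this, Complex.norm_exp_ofReal_mul_I]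

theorem ek_add (k j : Fin d → ℤ) (x : Fin d → ℝ) : ek (k + j) x = ek k x * ek j x := by
  unfold ek
  rw [← Complex.exp_add, ← Finset.sum_add_distrib]
  congr 1
  refine Finset.sum_congr rfl fun i _ => ?_
  simp only [Pi.add_apply]; push_cast; ring

theorem ek_per (k : Fin d → ℤ) (x : Fin d → ℝ) (l : Fin d → ℤ) :
    ek k (x + fun i => (l i : ℝ)) = ek k x := by
  unfold ek
  rw [Complex.exp_eq_exp_iff_exists_int]
  refine ⟨∑ i, k i * l i, ?_⟩
  push_cast
  rw [Finset.sum_mul, ← Finset.sum_add_distrib]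
  refine Finset.sum_congr rfl fun i _ => ?_
  simp only [Pi.add_apply]; push_cast; ring

/-- The symbol of the partial derivative. -/
noncomputable def sy (i : Fin d) (k : Fin d → ℤ) : ℂ := 2 * π * Complex.I * k i

theorem sy_norm (i : Fin d) (k : Fin d → ℤ) : ‖sy i k‖ = 2 * π * |(k i : ℝ)| := by
  unfold sy
  simp [abs_of_pos Real.pi_pos]

theorem sy_le (i : Fin d) (k : Fin d → ℤ) : ‖sy i k‖ ≤ 2 * π * wt k ^ 1 := by
  rw [sy_norm, pow_one]
  have := abs_le_wt k i
  have := Real.pi_pos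
  gcongr

theorem ek_contDiff (k : Fin d → ℤ) : ContDiff ℝ (⊤ : ℕ∞) (ek k : (Fin d → ℝ) → ℂ) := by
  unfold ek
  refine ContDiff.cexp ?_
  refine ContDiff.sum fun i _ => contDiff_const.mul ?_
  exact Complex.ofRealCLM.contDiff.comp (contDiff_apply ℝ ℝ i)

theorem ek_hasFDerivAt (k : Fin d → ℤ) (x : Fin d → ℝ) :
    HasFDerivAt (ek k : (Fin d → ℝ) → ℂ)
      (∑ i, (ContinuousLinearMap.proj (R := ℝ) (φ := fun _ : Fin d => ℝ) i).smulRight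
        (sy i k * ek k x)) x := by
  have h : HasFDerivAt (fun x : Fin d → ℝ => ∑ i, (2 * π * Complex.I * k i) * (x i : ℂ))
      (∑ i, (ContinuousLinearMap.proj (R := ℝ) (φ := fun _ : Fin d => ℝ) i).smulRight
        (sy i k)) x := by
    refine HasFDerivAt.fun_sum fun i _ => ?_
    have h1 : HasFDerivAt (fun x : Fin d → ℝ => (x i : ℂ))
      (Complex.ofRealCLM.comp (ContinuousLinearMap.proj (R := ℝ) (φ := fun _ : Fin d => ℝ) i)) x :=
      (Complex.ofRealCLM.comp
        (ContinuousLinearMap.proj (R := ℝ) (φ := fun _ : Fin d => ℝ) i)).hasFDerivAt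
    have h2 := h1.const_mul (2 * π * Complex.I * k i)
    refine h2.congr_fderiv ?_
    ext v
    simp [sy, mul_comm]
  refine h.cexp.congr_fderiv ?_
  ext v
  simp only [smul_apply, sum_apply,
    ContinuousLinearMap.smulRight_apply, ContinuousLinearMap.proj_apply, smul_eq_mul,
    Complex.real_smul, Finset.mul_sum, ek]
  refine Finset.sum_congr rfl fun i _ => by ring

theorem ek_fderiv (k : Fin d → ℤ) (x : Fin d → ℝ) (i : Fin d) :
    fderiv ℝ (ek k) x (Pi.single i 1) = sy i k * ek k x := by
  rw [(ek_hasFDerivAt k x).fderiv]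
  simp only [sum_apply,
    ContinuousLinearMap.smulRight_apply, ContinuousLinearMap.proj_apply]
  rw [Finset.sum_eq_single i]
  · simp
  · intro j _ hj; simp [hj]
  · simp

end partC

section partD
variable {d : ℕ} {I : Set ℝ} {a b c : ℝ → (Fin d → ℤ) → ℂ}

/-- Fourier synthesis. -/
noncomputable def Fs (c : (Fin d → ℤ) → ℂ) (x : Fin d → ℝ) : ℂ := ∑' k, c k * ek k x

theorem Fs_per (c : (Fin d → ℤ) → ℂ) (x : Fin d → ℝ) (l : Fin d → ℤ) :
    Fs c (x + fun i => (l i : ℝ)) = Fs c x := by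
  unfold Fs
  simp only [ek_per]

theorem RD.Fs_summable (h : RD I c) {t : ℝ} (ht : t ∈ I) (x : Fin d → ℝ) :
    Summable (fun k => c t k * ek k x) :=
  Summable.of_norm (by simpa [ek_norm] using h.summable_norm ht)

theorem RD.Fs_add (ha : RD I a) (hb : RD I b) {t : ℝ} (ht : t ∈ I) (x : Fin d → ℝ) :
    Fs (fun k => a t k + b t k) x = Fs (a t) x + Fs (b t) x := by
  unfold Fs
  simp only [add_mul]
  exact (ha.Fs_summable ht x).tsum_add (hb.Fs_summable ht x)

theorem RD.sum {ι : Type*} (s : Finset ι) {f : ι → ℝ → (Fin d → ℤ) → ℂ}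
    (h : ∀ i ∈ s, RD I (f i)) : RD I (fun t k => ∑ i ∈ s, f i t k) :=
  RDn.sum (n := 0) s h

theorem RD.Fs_sum {ι : Type*} (s : Finset ι) {f : ι → ℝ → (Fin d → ℤ) → ℂ}
    (h : ∀ i ∈ s, RD I (f i)) {t : ℝ} (ht : t ∈ I) (x : Fin d → ℝ) :
    Fs (fun k => ∑ i ∈ s, f i t k) x = ∑ i ∈ s, Fs (f i t) x := by
  unfold Fs
  simp only [Finset.sum_mul]
  exact Summable.tsum_finsetSum fun i hi => (h i hi).Fs_summable ht x

theorem RD.Fs_cv (ha : RD I a) (hb : RD I b) {t : ℝ} (ht : t ∈ I) (x : Fin d → ℝ) :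
    Fs (_root_.cv (a t) (b t)) x = Fs (a t) x * Fs (b t) x := by
  have sa : Summable (fun k => ‖a t k * ek k x‖) := by
    simpa [ek_norm] using ha.summable_norm ht
  have sb : Summable (fun k => ‖b t k * ek k x‖) := by
    simpa [ek_norm] using hb.summable_norm ht
  unfold Fs
  rw [tsum_mul_tsum_of_summable_norm sa sb]
  have hs := summable_mul_of_summable_norm sa sb
  let e : (Fin d → ℤ) × (Fin d → ℤ) ≃ (Fin d → ℤ) × (Fin d → ℤ) :=
    { toFun := fun p => (p.1 - p.2, p.2)
      invFun := fun p => (p.1 + p.2, p.2)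
      left_inv := fun p => by simp
      right_inv := fun p => by simp }
  rw [← e.tsum_eq]
  refine Eq.trans ?_ (Summable.tsum_prod (e.summable_iff.2 hs)).symm
  congr 1
  funext k
  unfold _root_.cv
  rw [← tsum_mul_right]
  congr 1
  funext j
  simp only [e, Function.comp_apply, Equiv.coe_fn_mk]
  have : ek k x = ek (k - j) x * ek j x := by rw [← ek_add, sub_add_cancel]
  rw [this]; ring

theorem RD.Fs_contOn (h : RD I c) :
    ContinuousOn (fun p : ℝ × (Fin d → ℝ) => Fs (c p.1) p.2) (I ×ˢ Set.univ) := by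
  obtain ⟨C, h0, hC⟩ := h.bound
  refine continuousOn_tsum (u := fun k => C * (wt k ^ (2 * d))⁻¹) ?_ (summable_wt.mul_left C) ?_
  · intro k
    refine ContinuousOn.mul ?_ ((ek_contDiff k).continuous.comp continuous_snd).continuousOn
    exact (h.cont k).comp continuousOn_fst (fun p hp => hp.1)
  · intro k p hp
    rw [norm_mul, ek_norm, mul_one]
    exact hC p.1 hp.1 k

theorem Fs_hasFDerivAt (hI : IsOpen I) (hI' : IsPreconnected I) (hc : RD I c)
    {c' : ℝ → (Fin d → ℤ) → ℂ} (hc' : RD I c')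
    (hd : ∀ t ∈ I, ∀ k, HasDerivAt (fun r => c r k) (c' t k) t) {t : ℝ} (ht : t ∈ I)
    (x : Fin d → ℝ) :
    HasFDerivAt (fun p : ℝ × (Fin d → ℝ) => Fs (c p.1) p.2)
      ((ContinuousLinearMap.fst ℝ ℝ (Fin d → ℝ)).smulRight (Fs (c' t) x)
        + ∑ i, ((ContinuousLinearMap.proj (R := ℝ) (φ := fun _ : Fin d => ℝ) i).comp
          (ContinuousLinearMap.snd ℝ ℝ (Fin d → ℝ))).smulRight
            (Fs (fun k => sy i k * c t k) x)) (t, x) := by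
  set L0 := ContinuousLinearMap.fst ℝ ℝ (Fin d → ℝ) with hL0
  set L : Fin d → (ℝ × (Fin d → ℝ)) →L[ℝ] ℝ := fun i =>
    (ContinuousLinearMap.proj (R := ℝ) (φ := fun _ : Fin d => ℝ) i).comp
          (ContinuousLinearMap.snd ℝ ℝ (Fin d → ℝ)) with hL
  have hsy : ∀ i, RD I (fun t k => sy i k * c t k) := fun i => hc.mulk (sy_le i)
  obtain ⟨C', _, hC'⟩ := hc'.bound
  have hb : ∀ i, ∃ C : ℝ, 0 ≤ C ∧ ∀ t ∈ I, ∀ k, ‖sy i k * c t k‖ ≤ C * (wt k ^ (2 * d))⁻¹ :=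
    fun i => (hsy i).bound
  choose Ci _ hCi using hb
  have key := hasFDerivAt_tsum_of_isPreconnected (𝕜 := ℝ)
    (f := fun (k : Fin d → ℤ) (p : ℝ × (Fin d → ℝ)) => c p.1 k * ek k p.2)
    (f' := fun k p => L0.smulRight (c' p.1 k * ek k p.2)
        + ∑ i, (L i).smulRight (sy i k * c p.1 k * ek k p.2))
    (u := fun k => ‖L0‖ * (C' * (wt k ^ (2 * d))⁻¹) + ∑ i, ‖L i‖ * (Ci i * (wt k ^ (2 * d))⁻¹))
    (s := I ×ˢ Set.univ) (x₀ := (t, x)) (x := (t, x))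
    ?_ (isOpen_strip hI) (hI'.prod isPreconnected_univ) ?_ ?_ ⟨ht, trivial⟩
    (hc.Fs_summable ht x) ⟨ht, trivial⟩
  · refine key.congr_fderiv ?_
    refine HasSum.tsum_eq ?_
    refine HasSum.add ?_ (hasSum_sum fun i _ => ?_)
    · exact ((hc'.Fs_summable ht x).hasSum).mapL
        (ContinuousLinearMap.smulRightL ℝ (ℝ × (Fin d → ℝ)) ℂ L0)
    · exact (((hsy i).Fs_summable ht x).hasSum).mapL
        (ContinuousLinearMap.smulRightL ℝ (ℝ × (Fin d → ℝ)) ℂ (L i))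
  · refine Summable.add ((summable_wt.mul_left _).mul_left _) (summable_sum fun i _ => ?_)
    exact (summable_wt.mul_left _).mul_left _
  · rintro k ⟨r, y⟩ ⟨hr, _⟩
    have h1 : HasFDerivAt (fun p : ℝ × (Fin d → ℝ) => c p.1 k)
        (L0.smulRight (c' r k)) (r, y) := by
      have := (hd r hr k).hasFDerivAt.comp (r, y) (hasFDerivAt_fst (𝕜 := ℝ) (p := (r, y)))
      refine this.congr_fderiv ?_
      ext v <;> simp [hL0]
    have h2 : HasFDerivAt (fun p : ℝ × (Fin d → ℝ) => ek k p.2)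
        ((∑ i, (ContinuousLinearMap.proj (R := ℝ) (φ := fun _ : Fin d => ℝ) i).smulRight
          (sy i k * ek k y)).comp (ContinuousLinearMap.snd ℝ ℝ (Fin d → ℝ))) (r, y) :=
      HasFDerivAt.comp (g := ek k) (f := Prod.snd) (r, y) (ek_hasFDerivAt k y)
        (hasFDerivAt_snd (𝕜 := ℝ) (p := (r, y)))
    refine (h1.mul h2).congr_fderiv ?_
    refine ContinuousLinearMap.ext fun v => ?_
    simp only [hL0, hL, add_apply, smul_apply, sum_apply,
      ContinuousLinearMap.comp_apply, ContinuousLinearMap.smulRight_apply,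
      ContinuousLinearMap.proj_apply, ContinuousLinearMap.coe_fst', ContinuousLinearMap.coe_snd',
      smul_eq_mul, Complex.real_smul, Finset.mul_sum]
    rw [add_comm]
    congr 1
    · ring
    · refine Finset.sum_congr rfl fun i _ => by ring
  · rintro k ⟨r, y⟩ ⟨hr, _⟩
    refine (norm_add_le _ _).trans (add_le_add ?_ ((norm_sum_le _ _).trans
      (Finset.sum_le_sum fun i _ => ?_)))
    · rw [ContinuousLinearMap.norm_smulRight_apply, norm_mul, ek_norm, mul_one]
      exact mul_le_mul_of_nonneg_left (hC' r hr k) (norm_nonneg _)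
    · rw [ContinuousLinearMap.norm_smulRight_apply, norm_mul, ek_norm, mul_one]
      exact mul_le_mul_of_nonneg_left (hCi i r hr k) (norm_nonneg _)

theorem Fs_contDiffOn (hI : IsOpen I) (hI' : IsPreconnected I) (n : ℕ) (hc : RDn n I c) :
    ContDiffOn ℝ n (fun p : ℝ × (Fin d → ℝ) => Fs (c p.1) p.2) (I ×ˢ Set.univ) := by
  induction n generalizing c with
  | zero =>
    simp only [Nat.cast_zero, contDiffOn_zero]
    exact hc.rd.Fs_contOn
  | succ n ih =>
    have hp := hc.pred
    obtain ⟨h1, c', h2, h3⟩ := hc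
    have hf : ∀ p ∈ I ×ˢ (Set.univ : Set (Fin d → ℝ)), HasFDerivAt
      (fun p : ℝ × (Fin d → ℝ) => Fs (c p.1) p.2) _ p :=
      fun p hp => Fs_hasFDerivAt hI hI' h1 h3.rd h2 hp.1 p.2
    have : ((n + 1 : ℕ) : WithTop ℕ∞) = (n : WithTop ℕ∞) + 1 := by norm_cast
    rw [this, contDiffOn_succ_iff_fderiv_of_isOpen (isOpen_strip hI)]
    refine ⟨fun p hp => (hf p hp).differentiableAt.differentiableWithinAt, by simp, ?_⟩
    refine ContDiffOn.congr ?_ (fun p hp => (hf p hp).fderiv)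
    refine ContDiffOn.add ?_ (ContDiffOn.sum fun i _ => ?_)
    · exact (ContinuousLinearMap.smulRightL ℝ (ℝ × (Fin d → ℝ)) ℂ _).contDiff.comp_contDiffOn
        (ih h3)
    · exact (ContinuousLinearMap.smulRightL ℝ (ℝ × (Fin d → ℝ)) ℂ _).contDiff.comp_contDiffOn
        (ih (hp.mulk (sy_le i)))

end partD

section partE
variable {d : ℕ}

/-- Fourier coefficients. -/
noncomputable def hat (v : (Fin d → ℝ) → ℝ) (k : Fin d → ℤ) : ℂ :=
  ∫ x in Set.Icc (0 : Fin d → ℝ) 1, ek (-k) x * (v x : ℂ)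

theorem hat_pd {v : (Fin d → ℝ) → ℝ} (hv : ContDiff ℝ (⊤ : ℕ∞) v) (pv : PeriodicIn d v)
    (i : Fin d) (k : Fin d → ℤ) : hat (fun x => pd d i v x) k = sy i k * hat v k := by
  have hc : ContDiff ℝ (⊤ : ℕ∞) (fun x => (v x : ℂ)) := Complex.ofRealCLM.contDiff.comp hv
  have hF : ContDiff ℝ (⊤ : ℕ∞) (fun x => ek (-k) x * (v x : ℂ)) := (ek_contDiff (-k)).mul hc
  have h0 := integral_partial_eq_zero (fun x => ek (-k) x * (v x : ℂ))
    (hF.of_le (by exact_mod_cast le_top)) (by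
      intro x l
      simp only [ek_per, pv x l]) i
  have e : ∀ x, fderiv ℝ (fun x => ek (-k) x * (v x : ℂ)) x (Pi.single i 1)
      = ek (-k) x * ((pd d i v x : ℝ) : ℂ) - sy i k * (ek (-k) x * (v x : ℂ)) := by
    intro x
    have h1 : HasFDerivAt (fun x => (v x : ℂ)) (Complex.ofRealCLM.comp (fderiv ℝ v x)) x :=
      Complex.ofRealCLM.hasFDerivAt.comp x ((hv.dat x).hasFDerivAt)
    have h2 := (ek_contDiff (-k)).differentiable (by simp) x
    have h4 : HasFDerivAt (fun x => ek (-k) x * (v x : ℂ)) _ x := (h2.hasFDerivAt).mul h1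
    rw [h4.fderiv]
    have h3 := ek_fderiv (-k) x i
    simp only [add_apply, smul_apply, ContinuousLinearMap.comp_apply, smul_eq_mul, h3]
    have : sy i (-k) = - sy i k := by unfold sy; simp
    rw [this]
    simp only [Complex.ofRealCLM_apply, pd]
    ring
  simp only [e] at h0
  rw [integral_sub, integral_const_mul, sub_eq_zero] at h0
  · exact h0
  · exact cont_intOn ((ek_contDiff _).continuous.mul
      (Complex.continuous_ofReal.comp (contDiff_pd hv i).continuous))
  · exact cont_intOn (continuous_const.mul hF.continuous)

theorem hat_norm_le {v : (Fin d → ℝ) → ℝ} {M : ℝ}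
    (h : ∀ x ∈ Set.Icc (0 : Fin d → ℝ) 1, |v x| ≤ M) (k : Fin d → ℤ) : ‖hat v k‖ ≤ M := by
  have := norm_setIntegral_le_of_norm_le_const (μ := volume) (s := Set.Icc (0 : Fin d → ℝ) 1)
    (f := fun x => ek (-k) x * (v x : ℂ)) (C := M) (by
      rw [Real.volume_Icc_pi]; simp)
    (fun x hx => by rw [norm_mul, ek_norm, one_mul, Complex.norm_real]; exact h x hx)
  simpa [hat, Measure.real, Real.volume_Icc_pi] using this

variable {I J K : Set ℝ} {v : ℝ → (Fin d → ℝ) → ℝ}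

theorem hat_dec_i (hI : IsOpen I) (hv : Sm I v) (pv : ∀ t ∈ I, PeriodicIn d (v t))
    (hK : IsCompact K) (hKI : K ⊆ I) (i : Fin d) (m : ℕ) :
    ∃ C : ℝ, 0 ≤ C ∧ ∀ t ∈ K, ∀ k : Fin d → ℤ, ‖hat (v t) k‖ * |(k i : ℝ)| ^ m ≤ C := by
  induction m generalizing v with
  | zero =>
    obtain ⟨C, hC⟩ := (hK.prod (isCompact_Icc (a := (0 : Fin d → ℝ)) (b := 1))).exists_bound_of_continuousOn
      (hv.continuousOn.mono (Set.prod_mono hKI (Set.subset_univ _)))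
    refine ⟨max C 0, le_max_right _ _, fun t ht k => ?_⟩
    rw [pow_zero, mul_one]
    exact hat_norm_le (fun x hx => (hC (t, x) ⟨ht, hx⟩).trans (le_max_left _ _)) k
  | succ m ih =>
    obtain ⟨C, h0, hC⟩ := ih (hv.dx hI i) (fun t ht => (pv t ht).pd' i)
    refine ⟨C, h0, fun t ht k => le_trans ?_ (hC t ht k)⟩
    rw [hat_pd (hv.space (hKI ht)) (pv t (hKI ht)) i k, norm_mul, sy_norm, pow_succ]
    have h1 : (1:ℝ) ≤ 2 * π := by nlinarith [Real.pi_gt_three]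
    have h2 : 0 ≤ ‖hat (v t) k‖ * |(k i : ℝ)| ^ m * |(k i : ℝ)| := by positivity
    nlinarith

theorem hat_dec (hI : IsOpen I) (hv : Sm I v) (pv : ∀ t ∈ I, PeriodicIn d (v t))
    (hK : IsCompact K) (hKI : K ⊆ I) (m : ℕ) :
    ∃ C : ℝ, 0 ≤ C ∧ ∀ t ∈ K, ∀ k : Fin d → ℤ, ‖hat (v t) k‖ * wt k ^ m ≤ C := by
  choose Ci h0 hCi using fun i => hat_dec_i hI hv pv hK hKI i m
  obtain ⟨C, hC⟩ := (hK.prod (isCompact_Icc (a := (0 : Fin d → ℝ)) (b := 1))).exists_bound_of_continuousOn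
      (hv.continuousOn.mono (Set.prod_mono hKI (Set.subset_univ _)))
  have hS : 0 ≤ ∑ i, Ci i := Finset.sum_nonneg fun i _ => h0 i
  refine ⟨2 ^ m * (max C 0 + ∑ i, Ci i), by positivity, fun t ht k => ?_⟩
  have hn : ‖hat (v t) k‖ ≤ max C 0 :=
    hat_norm_le (fun x hx => (hC (t, x) ⟨ht, hx⟩).trans (le_max_left _ _)) k
  by_cases hk : ‖k‖ ≤ 1
  · have : wt k ^ m ≤ 2 ^ m := pow_le_pow_left₀ (wt_pos k).le (by unfold wt; linarith) m
    calc ‖hat (v t) k‖ * wt k ^ m ≤ max C 0 * 2 ^ m :=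
        mul_le_mul hn this (pow_nonneg (wt_pos k).le _) (le_max_right _ _)
      _ ≤ _ := by nlinarith [mul_nonneg (pow_nonneg zero_le_two m) hS, le_max_right C 0, pow_pos (zero_lt_two (α := ℝ)) m]
  · push Not at hk
    obtain ⟨i, hi⟩ : ∃ i, ‖k‖ ≤ |(k i : ℝ)| := by
      by_contra! hcon
      have := (pi_norm_lt_iff (x := k) (r := ‖k‖) (by linarith)).2 (fun i => by
        rw [Int.norm_eq_abs]; exact hcon i)
      exact lt_irrefl _ this
    have : wt k ^ m ≤ 2 ^ m * |(k i : ℝ)| ^ m := by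
      rw [← mul_pow]
      exact pow_le_pow_left₀ (wt_pos k).le (by unfold wt; linarith) m
    calc ‖hat (v t) k‖ * wt k ^ m ≤ ‖hat (v t) k‖ * (2 ^ m * |(k i : ℝ)| ^ m) := by gcongr
      _ = 2 ^ m * (‖hat (v t) k‖ * |(k i : ℝ)| ^ m) := by ring
      _ ≤ 2 ^ m * (max C 0 + ∑ i, Ci i) := by
        gcongr
        have h1 := hCi i t ht k
        have h2 := Finset.single_le_sum (f := Ci) (fun i _ => h0 i) (Finset.mem_univ i)
        linarith [le_max_right C 0]

theorem hat_hasDerivAt (hI : IsOpen I) (hv : Sm I v) {t : ℝ} (ht : t ∈ I) (k : Fin d → ℤ) :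
    HasDerivAt (fun r => hat (v r) k) (hat (fun x => deriv (fun r => v r x) t) k) t := by
  have hG : Sm I (fun t x => ek (-k) x * (v t x : ℂ)) :=
    ContDiffOn.mul ((ek_contDiff (-k)).comp contDiff_snd).contDiffOn
      (Complex.ofRealCLM.contDiff.comp_contDiffOn hv)
  have := hG.param hI ht
  refine this.congr_deriv ?_
  unfold hat
  congr 1
  funext x
  exact ((hv.hasDeriv' hI ht x).ofReal_comp.const_mul _).deriv

theorem per_dt (hI : IsOpen I) (pv : ∀ t ∈ I, PeriodicIn d (v t)) :
    ∀ t ∈ I, PeriodicIn d (fun x => deriv (fun r => v r x) t) := by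
  intro t ht x k
  refine Filter.EventuallyEq.deriv_eq ?_
  filter_upwards [hI.mem_nhds ht] with r hr using pv r hr x k

theorem hat_RDn (hI : IsOpen I) (hv : Sm I v) (pv : ∀ t ∈ I, PeriodicIn d (v t))
    (hK : IsCompact K) (hKI : K ⊆ I) (hJ : J ⊆ K) (n : ℕ) :
    RDn n J (fun t => hat (v t)) := by
  have hrd : ∀ v : ℝ → (Fin d → ℝ) → ℝ, Sm I v → (∀ t ∈ I, PeriodicIn d (v t)) →
      RD J (fun t => hat (v t)) := fun v hv pv =>
    { cont := fun k t ht => (hat_hasDerivAt hI hv (hKI (hJ ht)) k).continuousAt.continuousWithinAt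
      dec := fun m => by
        obtain ⟨C, h0, hC⟩ := hat_dec hI hv pv hK hKI m
        exact ⟨C, h0, fun t ht k => hC t (hJ ht) k⟩ }
  induction n generalizing v with
  | zero => exact hrd v hv pv
  | succ n ih =>
    refine ⟨hrd v hv pv, fun t => hat (fun x => deriv (fun r => v r x) t), ?_, ?_⟩
    · exact fun t ht k => hat_hasDerivAt hI hv (hKI (hJ ht)) k
    · exact ih (hv.dt hI) (per_dt hI pv)

/-- Time independent decay. -/
theorem hat_dec_const {g : (Fin d → ℝ) → ℝ} (hg : ContDiff ℝ (⊤ : ℕ∞) g) (pg : PeriodicIn d g)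
    (m : ℕ) : ∃ C : ℝ, 0 ≤ C ∧ ∀ k : Fin d → ℤ, ‖hat g k‖ * wt k ^ m ≤ C := by
  obtain ⟨C, h0, hC⟩ := hat_dec (I := Set.univ) (K := {0}) (v := fun _ => g) isOpen_univ
    ((hg.comp contDiff_snd).contDiffOn) (fun _ _ => pg) isCompact_singleton (Set.subset_univ _) m
  exact ⟨C, h0, hC 0 rfl⟩

theorem hat_inv {g : (Fin d → ℝ) → ℝ} (hg : ContDiff ℝ (⊤ : ℕ∞) g) (pg : PeriodicIn d g)
    (x : Fin d → ℝ) : Fs (hat g) x = (g x : ℂ) := by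
  let q : (Fin d → ℝ) → UnitAddTorus (Fin d) := fun x i => (x i : UnitAddCircle)
  have hq : IsOpenQuotientMap q :=
    IsOpenQuotientMap.piMap (fun i => QuotientAddGroup.isOpenQuotientMap_mk)
  have hlift : ∀ x y, q x = q y → g x = g y := by
    intro x y h
    have : ∀ i, ∃ n : ℤ, y i = x i + n := by
      intro i
      have h1 : ((x i : ℝ) : UnitAddCircle) = (y i : ℝ) := congrFun h i
      have h2 : ((y i - x i : ℝ) : UnitAddCircle) = 0 := by
        rw [AddCircle.coe_sub, h1, sub_self]
      obtain ⟨n, hn⟩ := AddCircle.coe_eq_zero_iff (p := (1:ℝ)).1 h2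
      refine ⟨n, ?_⟩
      rw [zsmul_eq_mul, mul_one] at hn
      linarith
    choose n hn using this
    have : y = x + fun i => (n i : ℝ) := by funext i; simp [hn i]
    rw [this, pg x n]
  let G : UnitAddTorus (Fin d) → ℂ := fun y => (g (Function.surjInv hq.surjective y) : ℂ)
  have hG : ∀ x, G (q x) = (g x : ℂ) := fun x => by
    simp only [G]
    rw [hlift _ _ (Function.surjInv_eq hq.surjective (q x))]
  have hGc : Continuous G := by
    rw [← hq.continuous_comp_iff]
    have : G ∘ q = fun x => (g x : ℂ) := funext hG
    rw [this]
    exact Complex.continuous_ofReal.comp hg.continuous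
  let G' : C(UnitAddTorus (Fin d), ℂ) := ⟨G, hGc⟩
  have hmf : ∀ k x, UnitAddTorus.mFourier k (q x) = ek k x := by
    intro k x
    simp only [UnitAddTorus.mFourier, ek, ContinuousMap.coe_mk, Complex.exp_sum, q]
    refine Finset.prod_congr rfl fun i _ => ?_
    rw [fourier_coe_apply]
    congr 1
    push_cast; ring
  have hcoef : ∀ k, UnitAddTorus.mFourierCoeff G' k = hat g k := by
    intro k
    rw [UnitAddTorus.mFourierCoeff_eq_integral G' k 0]
    unfold hat
    have hset : {x : Fin d → ℝ | ∀ i, x i ∈ Set.Ioc ((0 : Fin d → ℝ) i) ((0 : Fin d → ℝ) i + 1)}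
        =ᵐ[volume] Set.Icc (0 : Fin d → ℝ) 1 := by
      have := Measure.univ_pi_Ioc_ae_eq_Icc (μ := fun _ : Fin d => (volume : Measure ℝ))
        (f := (0 : Fin d → ℝ)) (g := 1)
      have e : {x : Fin d → ℝ | ∀ i, x i ∈ Set.Ioc ((0 : Fin d → ℝ) i) ((0 : Fin d → ℝ) i + 1)}
        = Set.univ.pi fun i => Set.Ioc ((0 : Fin d → ℝ) i) ((1 : Fin d → ℝ) i) := by
        ext x; simp
      rw [e]
      exact this
    rw [setIntegral_congr_set hset]
    congr 1
    funext x
    rw [smul_eq_mul]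
    exact congrArg₂ _ (hmf _ x) (hG x)
  have hs : Summable (UnitAddTorus.mFourierCoeff G') := by
    have : UnitAddTorus.mFourierCoeff G' = hat g := funext hcoef
    rw [this]
    obtain ⟨C, h0, hC⟩ := hat_dec_const hg pg (2 * d)
    refine Summable.of_norm_bounded (summable_wt.mul_left C) (fun k => ?_)
    rw [← div_eq_mul_inv, le_div_iff₀ (pow_pos (wt_pos k) _)]
    exact hC k
  have := UnitAddTorus.hasSum_mFourier_series_apply_of_summable hs (q x)
  have h2 := this.tsum_eq
  change _ = G (q x) at h2
  rw [hG] at h2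
  rw [← h2]
  unfold Fs
  congr 1
  funext k
  rw [hcoef, hmf, smul_eq_mul]

end partE

section partF
variable {d : ℕ}

/-- Duhamel integral. -/
noncomputable def duh (l a : ℝ) (b : ℝ → ℂ) (t : ℝ) : ℂ :=
  (Real.exp (-(l * t)) : ℂ) * ∫ s in a..t, (Real.exp (l * s) : ℂ) * b s

variable {l a T : ℝ} {b : ℝ → ℂ}

theorem duh_self : duh l a b a = 0 := by simp [duh]

theorem duh_int (hb : ContinuousOn b (Set.Icc a T)) :
    ContinuousOn (fun s => (Real.exp (l * s) : ℂ) * b s) (Set.Icc a T) :=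
  ContinuousOn.mul (by fun_prop) hb

theorem duh_cont (haT : a ≤ T) (hb : ContinuousOn b (Set.Icc a T)) :
    ContinuousOn (duh l a b) (Set.Icc a T) := by
  refine ContinuousOn.mul (by fun_prop) ?_
  have := intervalIntegral.continuousOn_primitive_interval (μ := volume)
    (f := fun s => (Real.exp (l * s) : ℂ) * b s) (a := a) (b := T)
    (by rw [Set.uIcc_of_le haT]; exact (duh_int hb).integrableOn_compact isCompact_Icc)
  rwa [Set.uIcc_of_le haT] at this

theorem duh_hasDerivAt (hb : ContinuousOn b (Set.Icc a T)) {t : ℝ} (ht : t ∈ Set.Ioo a T) :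
    HasDerivAt (duh l a b) (-(l : ℂ) * duh l a b t + b t) t := by
  have hc := duh_int (l := l) hb
  have h1 : HasDerivAt (fun r => ∫ s in a..r, (Real.exp (l * s) : ℂ) * b s)
      ((Real.exp (l * t) : ℂ) * b t) t := by
    refine intervalIntegral.integral_hasDerivAt_right ?_ ?_ ?_
    · refine ContinuousOn.intervalIntegrable ?_
      rw [Set.uIcc_of_le ht.1.le]
      exact hc.mono (Set.Icc_subset_Icc_right ht.2.le)
    · exact (hc.mono Set.Ioo_subset_Icc_self).stronglyMeasurableAtFilter isOpen_Ioo t ht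
    · exact hc.continuousAt (Icc_mem_nhds ht.1 ht.2)
  have h2 : HasDerivAt (fun r : ℝ => (Real.exp (-(l * r)) : ℂ))
      ((Real.exp (-(l * t)) * (-l) : ℝ) : ℂ) t := by
    have : HasDerivAt (fun r : ℝ => -(l * r)) (-l) t := by
      simpa using ((hasDerivAt_id t).const_mul l).fun_neg
    exact (this.exp).ofReal_comp
  refine (h2.mul h1).congr_deriv ?_
  have e : (Real.exp (-(l * t)) : ℂ) * (Real.exp (l * t) : ℂ) = 1 := by
    rw [← Complex.ofReal_mul, ← Real.exp_add]; simp
  unfold duh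
  rw [← mul_assoc, e]
  push_cast
  ring

theorem duh_bound (hl : 0 ≤ l) {D Λ : ℝ} (hD : 0 ≤ D) (hΛ : 0 < Λ)
    {t : ℝ} (ht : a ≤ t) (h : ∀ s ∈ Set.Icc a t, ‖b s‖ ≤ D * Real.exp (Λ * s)) :
    ‖duh l a b t‖ ≤ D * Real.exp (Λ * t) / (l + Λ) := by
  have hp : 0 < l + Λ := by linarith
  have hi : ‖∫ s in a..t, (Real.exp (l * s) : ℂ) * b s‖
      ≤ ∫ s in a..t, D * Real.exp ((l + Λ) * s) := by
    refine intervalIntegral.norm_integral_le_of_norm_le ht ?_ ?_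
    · refine Filter.Eventually.of_forall fun s hs => ?_
      rw [norm_mul, Complex.norm_real, Real.norm_eq_abs, abs_of_pos (Real.exp_pos _), add_mul,
        Real.exp_add]
      have := h s ⟨hs.1.le, hs.2⟩
      have := mul_le_mul_of_nonneg_left this (Real.exp_pos (l * s)).le
      linarith
    · exact (by fun_prop : Continuous fun s => D * Real.exp ((l + Λ) * s)).intervalIntegrable _ _
  have he : ∫ s in a..t, D * Real.exp ((l + Λ) * s)
      = D * (Real.exp ((l + Λ) * t) / (l + Λ)) - D * (Real.exp ((l + Λ) * a) / (l + Λ)) := by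
    refine intervalIntegral.integral_eq_sub_of_hasDerivAt
      (f := fun s => D * (Real.exp ((l + Λ) * s) / (l + Λ))) (fun s _ => ?_) ?_
    · have : HasDerivAt (fun r : ℝ => (l + Λ) * r) (l + Λ) s := by
        simpa using (hasDerivAt_id s).const_mul (l + Λ)
      refine ((this.exp.div_const (l + Λ)).const_mul D).congr_deriv ?_
      field_simp
    · exact (by fun_prop : Continuous fun s => D * Real.exp ((l + Λ) * s)).intervalIntegrable _ _
  unfold duh
  rw [norm_mul, Complex.norm_real, Real.norm_eq_abs, abs_of_pos (Real.exp_pos _)]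
  have h3 : 0 ≤ D * (Real.exp ((l + Λ) * a) / (l + Λ)) := by positivity
  calc Real.exp (-(l * t)) * ‖∫ s in a..t, (Real.exp (l * s) : ℂ) * b s‖
      ≤ Real.exp (-(l * t)) * (D * (Real.exp ((l + Λ) * t) / (l + Λ))) := by
        gcongr; linarith
    _ = D * (Real.exp (-(l * t)) * Real.exp ((l + Λ) * t)) / (l + Λ) := by ring
    _ = _ := by rw [← Real.exp_add]; ring_nf

/-- Advection operator on coefficients. -/
noncomputable def Bop (U : Fin d → (Fin d → ℤ) → ℂ) (c : (Fin d → ℤ) → ℂ) (k : Fin d → ℤ) : ℂ :=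
  ∑ i, cv (U i) (fun j => sy i j * c j) k

/-- Diffusion symbol. -/
noncomputable def lam (κ : ℝ) (k : Fin d → ℤ) : ℝ := κ * ∑ i, (k i : ℝ) ^ 2

theorem lam_nonneg {κ : ℝ} (hκ : 0 ≤ κ) (k : Fin d → ℤ) : 0 ≤ lam κ k :=
  mul_nonneg hκ (Finset.sum_nonneg fun _ _ => sq_nonneg _)

theorem lam_ge {κ : ℝ} (hκ : 0 ≤ κ) (k : Fin d → ℤ) : κ * ‖k‖ ^ 2 ≤ lam κ k := by
  refine mul_le_mul_of_nonneg_left ?_ hκ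
  have : ‖k‖ ≤ √(∑ i, (k i : ℝ) ^ 2) := by
    refine (pi_norm_le_iff_of_nonneg (Real.sqrt_nonneg _)).2 fun i => ?_
    rw [Int.norm_eq_abs]
    refine Real.abs_le_sqrt ?_
    exact Finset.single_le_sum (f := fun i => (k i : ℝ) ^ 2) (fun _ _ => sq_nonneg _)
      (Finset.mem_univ i)
  calc ‖k‖ ^ 2 ≤ √(∑ i, (k i : ℝ) ^ 2) ^ 2 := by gcongr
    _ = _ := Real.sq_sqrt (Finset.sum_nonneg fun _ _ => sq_nonneg _)

theorem lam_le {κ : ℝ} (hκ : 0 ≤ κ) (k : Fin d → ℤ) : ‖-(lam κ k : ℂ)‖ ≤ (κ * d) * wt k ^ 2 := by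
  rw [norm_neg, Complex.norm_real, Real.norm_eq_abs, abs_of_nonneg (lam_nonneg hκ k), lam, mul_assoc]
  refine mul_le_mul_of_nonneg_left ?_ hκ
  calc ∑ i, (k i : ℝ) ^ 2 ≤ ∑ _i : Fin d, wt k ^ 2 :=
      Finset.sum_le_sum fun i _ => sq_le_sq' (by linarith [abs_le.1 (abs_le_wt k i)]) (abs_le.1 (abs_le_wt k i)).2
    _ = _ := by simp

/-- Iterates. -/
noncomputable def dl (κ a : ℝ) (U : Fin d → ℝ → (Fin d → ℤ) → ℂ) (g : (Fin d → ℤ) → ℂ) :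
    ℕ → ℝ → (Fin d → ℤ) → ℂ
  | 0 => fun t k => (Real.exp (-(lam κ k * (t - a))) : ℂ) * g k
  | (n + 1) => fun t k => -duh (lam κ k) a (fun s => Bop (fun i => U i s) (dl κ a U g n s) k) t

variable {κ : ℝ} {U : Fin d → ℝ → (Fin d → ℤ) → ℂ} {g : (Fin d → ℤ) → ℂ}

theorem Bop_RD {I : Set ℝ} (hU : ∀ i, RD I (U i)) {c : ℝ → (Fin d → ℤ) → ℂ} (hc : RD I c) :
    RD I (fun s => Bop (fun i => U i s) (c s)) :=
  RD.sum (f := fun i t => cv (U i t) (fun j => sy i j * c t j)) Finset.univ fun i _ =>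
    (hU i).cv (hc.mulk (sy_le i))

theorem Bop_RDn {I : Set ℝ} (hI : IsOpen I) (hI' : IsPreconnected I) {n : ℕ}
    (hU : ∀ i, RDn n I (U i)) {c : ℝ → (Fin d → ℤ) → ℂ} (hc : RDn n I c) :
    RDn n I (fun s => Bop (fun i => U i s) (c s)) :=
  RDn.sum (f := fun i t => cv (U i t) (fun j => sy i j * c t j)) Finset.univ fun i _ =>
    (hU i).cv hI hI' (hc.mulk (sy_le i))

theorem Bop_bound {I : Set ℝ} (hU : ∀ i, RD I (U i)) (m : ℕ) :
    ∃ A : ℝ, 0 ≤ A ∧ ∀ t ∈ I, ∀ (c : (Fin d → ℤ) → ℂ) (X : ℝ), 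
      (∀ k, ‖c k‖ * wt k ^ (m + 1) ≤ X) → ∀ k, ‖Bop (fun i => U i t) c k‖ * wt k ^ m ≤ A * X := by
  choose Ai h0 hAi using fun i => (hU i).dec (m + 2 * d)
  refine ⟨∑ i, Ai i * (2 * π) * Sw d, Finset.sum_nonneg fun i _ => 
    mul_nonneg (mul_nonneg (h0 i) (by positivity)) Sw_nonneg, fun t ht c X hc k => ?_⟩
  unfold Bop
  calc ‖∑ i, cv (U i t) (fun j => sy i j * c j) k‖ * wt k ^ m
      ≤ (∑ i, ‖cv (U i t) (fun j => sy i j * c j) k‖) * wt k ^ m :=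
        mul_le_mul_of_nonneg_right (norm_sum_le _ _) (pow_nonneg (wt_pos k).le _)
    _ = ∑ i, ‖cv (U i t) (fun j => sy i j * c j) k‖ * wt k ^ m := by rw [Finset.sum_mul]
    _ ≤ ∑ i, Ai i * (2 * π * X) * Sw d := by
      refine Finset.sum_le_sum fun i _ => cv_bound (hAi i t ht) (fun j => ?_) k
      rw [norm_mul]
      have h1 := sy_le i j
      have h2 := hc j
      calc ‖sy i j‖ * ‖c j‖ * wt j ^ m ≤ (2 * π * wt j ^ 1) * ‖c j‖ * wt j ^ m := by
            have := wt_pos j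
            gcongr
        _ = 2 * π * (‖c j‖ * wt j ^ (m + 1)) := by ring
        _ ≤ _ := by gcongr
    _ = _ := by rw [Finset.sum_mul]; exact Finset.sum_congr rfl fun i _ => by ring

theorem dl_RD (hκ : 0 ≤ κ) (haT : a ≤ T) (hU : ∀ i, RD (Set.Icc a T) (U i))
    (hg : ∀ m : ℕ, ∃ C : ℝ, 0 ≤ C ∧ ∀ k, ‖g k‖ * wt k ^ m ≤ C) (n : ℕ) :
    RD (Set.Icc a T) (dl κ a U g n) := by
  induction n with
  | zero =>
    refine ⟨fun k => by unfold dl; fun_prop, fun m => ?_⟩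
    obtain ⟨C, h0, hC⟩ := hg m
    refine ⟨C, h0, fun t ht k => le_trans ?_ (hC k)⟩
    refine mul_le_mul_of_nonneg_right ?_ (pow_nonneg (wt_pos k).le _)
    simp only [dl]
    rw [norm_mul, Complex.norm_real, Real.norm_eq_abs, abs_of_pos (Real.exp_pos _)]
    refine mul_le_of_le_one_left (norm_nonneg _) (Real.exp_le_one_iff.2 ?_)
    have := mul_nonneg (lam_nonneg hκ k) (sub_nonneg.2 ht.1)
    linarith
  | succ n ih =>
    have hB := Bop_RD hU ih
    refine ⟨fun k => (duh_cont haT (hB.cont k)).neg, fun m => ?_⟩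
    obtain ⟨C, h0, hC⟩ := hB.dec m
    refine ⟨C * Real.exp (-a) * Real.exp T, by positivity, fun t ht k => ?_⟩
    have hw := pow_pos (wt_pos k) m
    have := duh_bound (a := a) (b := fun s => Bop (fun i => U i s) (dl κ a U g n s) k)
      (lam_nonneg hκ k) (D := C / wt k ^ m * Real.exp (-a)) (Λ := 1) (by positivity) one_pos ht.1
      (fun s hs => by
        have h1 := hC s ⟨hs.1, hs.2.trans ht.2⟩ k
        rw [← le_div_iff₀ hw] at h1
        rw [mul_assoc, ← Real.exp_add]
        refine h1.trans (le_mul_of_one_le_right (by positivity) (Real.one_le_exp ?_))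
        linarith [hs.1])
    simp only [dl, norm_neg]
    rw [← le_div_iff₀ hw]
    refine this.trans ?_
    have h1 : (1:ℝ) ≤ lam κ k + 1 := by linarith [lam_nonneg hκ k]
    refine (div_le_self (by positivity) h1).trans ?_
    rw [one_mul, div_mul_eq_mul_div, div_mul_eq_mul_div]
    gcongr
    exact ht.2

theorem dl_bound (hκ : 0 < κ) (haT : a ≤ T) (hU : ∀ i, RD (Set.Icc a T) (U i))
    (hg : ∀ m : ℕ, ∃ C : ℝ, 0 ≤ C ∧ ∀ k, ‖g k‖ * wt k ^ m ≤ C) (m : ℕ) :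
    ∃ C : ℝ, 0 ≤ C ∧ ∀ n, ∀ t ∈ Set.Icc a T, ∀ k,
      ‖dl κ a U g n t k‖ * wt k ^ m ≤ C * (1/2) ^ n := by
  obtain ⟨A, hA0, hA⟩ := Bop_bound hU m
  obtain ⟨G, hG0, hG⟩ := hg (m + 1)
  set Λ := 2 * A + A ^ 2 / κ + 1 with hΛ
  have hΛp : 0 < Λ := by positivity
  have key : ∀ k : Fin d → ℤ, 2 * A * wt k ≤ lam κ k + Λ := by
    intro k
    have h1 := lam_ge hκ.le k
    have h2 : 2 * A * ‖k‖ ≤ κ * ‖k‖ ^ 2 + A ^ 2 / κ := by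
      have : κ * ‖k‖ ^ 2 + A ^ 2 / κ - 2 * A * ‖k‖ = (κ * ‖k‖ - A) ^ 2 / κ := by
        field_simp; ring
      have h3 : 0 ≤ (κ * ‖k‖ - A) ^ 2 / κ := by positivity
      linarith
    unfold wt
    nlinarith
  set D := G * Real.exp (-(Λ * a)) with hD
  have hD0 : 0 ≤ D := by positivity
  have main : ∀ n, ∀ t ∈ Set.Icc a T, ∀ k,
      ‖dl κ a U g n t k‖ * wt k ^ (m + 1) ≤ D * (1/2) ^ n * Real.exp (Λ * t) := by
    intro n
    induction n with
    | zero =>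
      intro t ht k
      have h1 : ‖dl κ a U g 0 t k‖ ≤ ‖g k‖ := by
        simp only [dl]
        rw [norm_mul, Complex.norm_real, Real.norm_eq_abs, abs_of_pos (Real.exp_pos _)]
        refine mul_le_of_le_one_left (norm_nonneg _) (Real.exp_le_one_iff.2 ?_)
        have := mul_nonneg (lam_nonneg hκ.le k) (sub_nonneg.2 ht.1)
        linarith
      refine (mul_le_mul_of_nonneg_right h1 (pow_nonneg (wt_pos k).le _)).trans ((hG k).trans ?_)
      rw [pow_zero, mul_one, hD, mul_assoc, ← Real.exp_add]
      refine le_mul_of_one_le_right hG0 (Real.one_le_exp ?_)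
      nlinarith [ht.1]
    | succ n ih =>
      intro t ht k
      have hw := pow_pos (wt_pos k) m
      have hb := duh_bound (a := a) (b := fun s => Bop (fun i => U i s) (dl κ a U g n s) k)
        (lam_nonneg hκ.le k) (D := A * (D * (1/2) ^ n) / wt k ^ m) (Λ := Λ) (by positivity)
        hΛp ht.1 (fun s hs => by
          have hs' : s ∈ Set.Icc a T := ⟨hs.1, hs.2.trans ht.2⟩
          have h1 := hA s hs' (dl κ a U g n s) _ (ih s hs') k
          rw [← le_div_iff₀ hw] at h1
          refine h1.trans (le_of_eq (by ring)))
      simp only [dl, norm_neg]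
      have hlp : 0 < lam κ k + Λ := by linarith [lam_nonneg hκ.le k]
      refine (mul_le_mul_of_nonneg_right hb (pow_nonneg (wt_pos k).le _)).trans ?_
      rw [div_mul_eq_mul_div, div_le_iff₀ hlp]
      have e : A * (D * (1/2) ^ n) / wt k ^ m * Real.exp (Λ * t) * wt k ^ (m + 1)
        = (D * (1/2) ^ (n+1) * Real.exp (Λ * t)) * (2 * A * wt k) := by
        rw [pow_succ (wt k), pow_succ]; field_simp
      rw [e]
      exact mul_le_mul_of_nonneg_left (key k) (by positivity)
  refine ⟨D * Real.exp (Λ * T), by positivity, fun n t ht k => ?_⟩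
  have h1 := main n t ht k
  have h2 : ‖dl κ a U g n t k‖ * wt k ^ m ≤ ‖dl κ a U g n t k‖ * wt k ^ (m + 1) :=
    mul_le_mul_of_nonneg_left (pow_le_pow_right₀ (one_le_wt k) (Nat.le_succ m)) (norm_nonneg _)
  refine h2.trans (h1.trans ?_)
  have h3 : Real.exp (Λ * t) ≤ Real.exp (Λ * T) :=
    Real.exp_le_exp.2 (mul_le_mul_of_nonneg_left ht.2 hΛp.le)
  calc D * (1/2) ^ n * Real.exp (Λ * t) ≤ D * (1/2) ^ n * Real.exp (Λ * T) := by gcongr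
    _ = _ := by ring

end partF

section partG
variable {d : ℕ} {a T κ : ℝ} {U : Fin d → ℝ → (Fin d → ℤ) → ℂ} {g : (Fin d → ℤ) → ℂ}

/-- Coefficients of the solution. -/
noncomputable def cs (κ a : ℝ) (U : Fin d → ℝ → (Fin d → ℤ) → ℂ) (g : (Fin d → ℤ) → ℂ)
    (t : ℝ) (k : Fin d → ℤ) : ℂ := ∑' n, dl κ a U g n t k

theorem summable_half (C : ℝ) : Summable (fun n : ℕ => C * (1/2 : ℝ) ^ n) :=
  summable_geometric_two.mul_left C

theorem cs_start : cs κ a U g a = g := by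
  funext k
  unfold cs
  rw [tsum_eq_single 0]
  · simp [dl]
  · intro n hn
    obtain ⟨m, rfl⟩ := Nat.exists_eq_succ_of_ne_zero hn
    simp [dl, duh_self]

theorem dl_summable (hκ : 0 < κ) (haT : a ≤ T) (hU : ∀ i, RD (Set.Icc a T) (U i))
    (hg : ∀ m : ℕ, ∃ C : ℝ, 0 ≤ C ∧ ∀ k, ‖g k‖ * wt k ^ m ≤ C) {t : ℝ} (ht : t ∈ Set.Icc a T)
    (k : Fin d → ℤ) : Summable (fun n => dl κ a U g n t k) := by
  obtain ⟨C, _, hC⟩ := dl_bound hκ haT hU hg 0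
  refine Summable.of_norm_bounded (summable_half C) fun n => ?_
  simpa using hC n t ht k

theorem cs_RD (hκ : 0 < κ) (haT : a ≤ T) (hU : ∀ i, RD (Set.Icc a T) (U i))
    (hg : ∀ m : ℕ, ∃ C : ℝ, 0 ≤ C ∧ ∀ k, ‖g k‖ * wt k ^ m ≤ C) :
    RD (Set.Icc a T) (cs κ a U g) where
  cont k := by
    obtain ⟨C, _, hC⟩ := dl_bound hκ haT hU hg 0
    refine continuousOn_tsum (fun n => (dl_RD hκ.le haT hU hg n).cont k) (summable_half C) ?_
    intro n t ht
    simpa using hC n t ht k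
  dec m := by
    obtain ⟨C, h0, hC⟩ := dl_bound hκ haT hU hg m
    refine ⟨C * 2, by positivity, fun t ht k => ?_⟩
    have hw := pow_pos (wt_pos k) m
    rw [← le_div_iff₀ hw]
    refine tsum_of_norm_bounded (g := fun n => C / wt k ^ m * (1/2 : ℝ) ^ n) ?_ (fun n => ?_)
    · have := hasSum_geometric_two.mul_left (C / wt k ^ m)
      rwa [div_mul_eq_mul_div] at this
    · rw [div_mul_eq_mul_div, le_div_iff₀ hw]
      exact hC n t ht k

theorem Bop_hasSum (hκ : 0 < κ) (haT : a ≤ T) (hU : ∀ i, RD (Set.Icc a T) (U i))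
    (hg : ∀ m : ℕ, ∃ C : ℝ, 0 ≤ C ∧ ∀ k, ‖g k‖ * wt k ^ m ≤ C) {t : ℝ} (ht : t ∈ Set.Icc a T)
    (k : Fin d → ℤ) :
    HasSum (fun n => Bop (fun i => U i t) (dl κ a U g n t) k)
      (Bop (fun i => U i t) (cs κ a U g t) k) := by
  unfold Bop
  refine hasSum_sum fun i _ => ?_
  obtain ⟨C, h0, hC⟩ := dl_bound hκ haT hU hg 1
  obtain ⟨V, hV0, hV⟩ := (hU i).bound
  have hs : Summable (fun p : ℕ × (Fin d → ℤ) => U i t (k - p.2) * (sy i p.2 * dl κ a U g p.1 t p.2)) := by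
    have hp : Summable (fun p : ℕ × (Fin d → ℤ) =>
        ((2 * π * C) * (1/2 : ℝ) ^ p.1) * (V * (wt (k - p.2) ^ (2 * d))⁻¹)) := by
      refine Summable.mul_of_nonneg (f := fun n : ℕ => (2 * π * C) * (1/2 : ℝ) ^ n)
        (g := fun j : Fin d → ℤ => V * (wt (k - j) ^ (2 * d))⁻¹)
        (summable_half _) ((summable_wt_sub k).mul_left V) (fun n => ?_) (fun j => ?_)
      · simp only [Pi.zero_apply]; positivity
      · have := wt_pos (k - j)
        simp only [Pi.zero_apply]; positivity
    refine Summable.of_norm_bounded hp fun p => ?_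
    rw [norm_mul, norm_mul, mul_comm]
    refine mul_le_mul ?_ (hV t ht _) (norm_nonneg _) (by positivity)
    calc ‖sy i p.2‖ * ‖dl κ a U g p.1 t p.2‖ ≤ (2 * π * wt p.2 ^ 1) * ‖dl κ a U g p.1 t p.2‖ :=
          mul_le_mul_of_nonneg_right (sy_le i p.2) (norm_nonneg _)
      _ = 2 * π * (‖dl κ a U g p.1 t p.2‖ * wt p.2 ^ 1) := by ring
      _ ≤ 2 * π * (C * (1/2) ^ p.1) := by
        have := hC p.1 t ht p.2
        gcongr
      _ = _ := by ring
  have h1 := hs.hasSum.prod_fiberwise (fun n => (hs.prod_factor n).hasSum)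
  have h2 : ∑' p : ℕ × (Fin d → ℤ), U i t (k - p.2) * (sy i p.2 * dl κ a U g p.1 t p.2)
      = cv (U i t) (fun j => sy i j * cs κ a U g t j) k := by
    rw [hs.tsum_prod]
    refine (Summable.tsum_comm (f := fun j n => U i t (k - j) * (sy i j * dl κ a U g n t j))
      ?_).trans ?_
    rotate_left
    · unfold cv cs
      congr 1
      funext j
      rw [tsum_mul_left, tsum_mul_left]
    · exact (Equiv.prodComm _ _).summable_iff.1 hs
  rw [h2] at h1
  exact h1

/-- Shifted sequence. -/
def shf (f : ℕ → ℂ) : ℕ → ℂ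
  | 0 => 0
  | (n + 1) => f n

theorem cs_hasDerivAt (hκ : 0 < κ) (haT : a ≤ T) (hU : ∀ i, RD (Set.Icc a T) (U i))
    (hg : ∀ m : ℕ, ∃ C : ℝ, 0 ≤ C ∧ ∀ k, ‖g k‖ * wt k ^ m ≤ C) {t : ℝ} (ht : t ∈ Set.Ioo a T)
    (k : Fin d → ℤ) :
    HasDerivAt (fun r => cs κ a U g r k)
      (-(lam κ k : ℂ) * cs κ a U g t k + (-1) * Bop (fun i => U i t) (cs κ a U g t) k) t := by
  obtain ⟨C, h0, hC⟩ := dl_bound hκ haT hU hg 0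
  obtain ⟨C1, h1, hC1⟩ := dl_bound hκ haT hU hg 1
  obtain ⟨A, hA0, hA⟩ := Bop_bound hU 0
  let e : ℕ → ℝ → ℂ := fun n r => -(lam κ k : ℂ) * dl κ a U g n r k
    - shf (fun m => Bop (fun i => U i r) (dl κ a U g m r) k) n
  have ht' := Set.Ioo_subset_Icc_self ht
  have hder : ∀ n, ∀ r ∈ Set.Ioo a T, HasDerivAt (fun s => dl κ a U g n s k) (e n r) r := by
    intro n r hr
    cases n with
    | zero =>
      simp only [e, dl, shf, sub_zero]
      have : HasDerivAt (fun s : ℝ => -(lam κ k * (s - a))) (-lam κ k) r := by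
        simpa using (((hasDerivAt_id r).sub_const a).const_mul (lam κ k)).fun_neg
      refine ((this.exp).ofReal_comp.mul_const (g k)).congr_deriv ?_
      push_cast; ring
    | succ m =>
      simp only [e, dl, shf]
      refine (duh_hasDerivAt (T := T) ((Bop_RD hU (dl_RD hκ.le haT hU hg m)).cont k) hr).fun_neg.congr_deriv ?_
      ring
  have hbd : ∀ n, ∀ r ∈ Set.Ioo a T, ‖e n r‖ ≤ (lam κ k * C + 2 * A * C1) * (1/2) ^ n := by
    intro n r hr
    have hr' := Set.Ioo_subset_Icc_self hr
    have hl := lam_nonneg hκ.le k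
    have b1 : ‖-(lam κ k : ℂ) * dl κ a U g n r k‖ ≤ lam κ k * (C * (1/2) ^ n) := by
      rw [norm_mul, norm_neg, Complex.norm_real, Real.norm_eq_abs, abs_of_nonneg hl]
      have := hC n r hr' k
      rw [pow_zero, mul_one] at this
      gcongr
    refine (norm_sub_le _ _).trans ?_
    cases n with
    | zero =>
      simp only [shf, norm_zero, add_zero]
      refine b1.trans ?_
      simp only [pow_zero, mul_one]
      have : 0 ≤ 2 * A * C1 := by positivity
      linarith
    | succ m =>
      have b2 := hA r hr' (dl κ a U g m r) _ (hC1 m r hr') k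
      rw [pow_zero, mul_one] at b2
      refine (add_le_add b1 b2).trans (le_of_eq ?_)
      rw [pow_succ]; ring
  have key := hasDerivAt_tsum_of_isPreconnected (g := fun n s => dl κ a U g n s k) (g' := e)
    (summable_half (lam κ k * C + 2 * A * C1)) isOpen_Ioo isPreconnected_Ioo hder hbd ht
    (dl_summable hκ haT hU hg ht' k) ht
  refine key.congr_deriv ?_
  have s1 := (dl_summable hκ haT hU hg ht' k).hasSum.mul_left (-(lam κ k : ℂ))
  have s2 : HasSum (fun n : ℕ => shf
      (fun m => Bop (fun i => U i t) (dl κ a U g m t) k) n)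
      (Bop (fun i => U i t) (cs κ a U g t) k) := by
    rw [← hasSum_nat_add_iff' 1]
    simpa [shf] using Bop_hasSum hκ haT hU hg ht' k
  rw [(s1.sub s2).tsum_eq]
  unfold cs
  ring

theorem cs_RDn (hκ : 0 < κ) (haT : a ≤ T) (hU : ∀ i, RD (Set.Icc a T) (U i))
    (hU' : ∀ i n, RDn n (Set.Ioo a T) (U i))
    (hg : ∀ m : ℕ, ∃ C : ℝ, 0 ≤ C ∧ ∀ k, ‖g k‖ * wt k ^ m ≤ C) (n : ℕ) :
    RDn n (Set.Ioo a T) (cs κ a U g) := by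
  induction n with
  | zero => exact (cs_RD hκ haT hU hg).mono Set.Ioo_subset_Icc_self
  | succ n ih =>
    refine ⟨ih.rd, _, fun t ht k => cs_hasDerivAt hκ haT hU hg ht k, ?_⟩
    refine RDn.add (ih.mulk (lam_le hκ.le)) ?_
    exact (Bop_RDn isOpen_Ioo isPreconnected_Ioo (fun i => hU' i n) ih).mulk
      (p := fun _ => -1) (C := 1) (q := 0) (fun k => by simp)

theorem pd_Fs {I : Set ℝ} (hI : IsOpen I) (hI' : IsPreconnected I) {c : ℝ → (Fin d → ℤ) → ℂ}
    (hc : RDn 1 I c) {t : ℝ} (ht : t ∈ I) (x : Fin d → ℝ) (i : Fin d) :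
    pd d i (fun y => (Fs (c t) y).re) x = (Fs (fun k => sy i k * c t k) x).re := by
  obtain ⟨h1, c', h2, h3⟩ := hc
  have h := Fs_hasFDerivAt hI hI' h1 h3.rd h2 ht x
  have h4 : HasFDerivAt (fun y : Fin d → ℝ => ((t, y) : ℝ × (Fin d → ℝ)))
     (ContinuousLinearMap.inr ℝ ℝ (Fin d → ℝ)) x := hasFDerivAt_prodMk_right t x
  have h5 : HasFDerivAt (fun y => Fs (c t) y) _ x :=
    HasFDerivAt.comp (g := fun p : ℝ × (Fin d → ℝ) => Fs (c p.1) p.2) x h h4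
  have h6 : HasFDerivAt (fun y => (Fs (c t) y).re) _ x := Complex.reCLM.hasFDerivAt.comp x h5
  unfold pd
  rw [h6.fderiv]
  simp only [ContinuousLinearMap.comp_apply, add_apply, sum_apply,
      ContinuousLinearMap.smulRight_apply, ContinuousLinearMap.proj_apply,
      ContinuousLinearMap.coe_fst', ContinuousLinearMap.coe_snd', ContinuousLinearMap.inr_apply,
      zero_smul, zero_add, Complex.reCLM_apply]
  rw [Finset.sum_eq_single i]
  · simp
  · intro j _ hj; simp [hj]
  · simp

theorem dt_Fs {I : Set ℝ} (hI : IsOpen I) (hI' : IsPreconnected I) {c c' : ℝ → (Fin d → ℤ) → ℂ}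
    (hc : RD I c) (hc' : RD I c')
    (hd : ∀ t ∈ I, ∀ k, HasDerivAt (fun r => c r k) (c' t k) t) {t : ℝ} (ht : t ∈ I)
    (x : Fin d → ℝ) :
    deriv (fun r => (Fs (c r) x).re) t = (Fs (c' t) x).re := by
  have h := Fs_hasFDerivAt hI hI' hc hc' hd ht x
  have h4 : HasDerivAt (fun r : ℝ => ((r, x) : ℝ × (Fin d → ℝ))) (1, 0) t :=
    (hasDerivAt_id t).prodMk (hasDerivAt_const t x)
  have h5 : HasDerivAt (fun r => Fs (c r) x) _ t :=
    HasFDerivAt.comp_hasDerivAt (l := fun p : ℝ × (Fin d → ℝ) => Fs (c p.1) p.2) t h h4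
  have h6 : HasDerivAt (fun r => (Fs (c r) x).re) _ t :=
    Complex.reCLM.hasFDerivAt.comp_hasDerivAt t h5
  rw [h6.deriv]
  simp

/-- Existence of smooth solutions. -/
theorem exists_sol {ν : ℝ} (hν : 0 < ν) (ha : 0 < a) {v : ℝ → (Fin d → ℝ) → (Fin d → ℝ)}
    (hv : ∀ i, Sm (Set.Ioi 0) (fun t x => v t x i))
    (pv : ∀ t ∈ Set.Ioi (0:ℝ), ∀ i, PeriodicIn d (fun x => v t x i))
    {g : (Fin d → ℝ) → ℝ} (hg : ContDiff ℝ (⊤ : ℕ∞) g) (pg : PeriodicIn d g) :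
    ∃ φ : ℝ → (Fin d → ℝ) → ℝ, IsSol d ν v (Set.Ioi a) φ ∧
      ContinuousOn (fun p : ℝ × (Fin d → ℝ) => φ p.1 p.2) (Set.Ici a ×ˢ Set.univ) ∧ φ a = g := by
  set U : Fin d → ℝ → (Fin d → ℤ) → ℂ := fun i t => hat (fun x => v t x i) with hUdef
  set κ := 4 * π ^ 2 * ν with hκdef
  have hκ : 0 < κ := by positivity
  have hsub : ∀ T, Set.Icc a T ⊆ Set.Ioi 0 := fun T t ht => lt_of_lt_of_le ha ht.1
  have hU : ∀ T i, RD (Set.Icc a T) (U i) := fun T i =>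
    (hat_RDn isOpen_Ioi (hv i) (fun t ht => pv t ht i) isCompact_Icc (hsub T) subset_rfl 0)
  have hU' : ∀ T i n, RDn n (Set.Ioo a T) (U i) := fun T i n =>
    (hat_RDn isOpen_Ioi (hv i) (fun t ht => pv t ht i) isCompact_Icc (hsub T)
      Set.Ioo_subset_Icc_self n)
  have hg' := fun m => hat_dec_const hg pg m
  set c := cs κ a U (hat g) with hc
  have hRD : ∀ T, a ≤ T → RD (Set.Icc a T) c := fun T hT => cs_RD hκ hT (hU T) hg'
  have hRDn : ∀ T, a ≤ T → ∀ n, RDn n (Set.Ioo a T) c := fun T hT n =>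
    cs_RDn hκ hT (hU T) (hU' T) hg' n
  have hsm : ∀ T, a ≤ T → Sm (Set.Ioo a T) (fun t x => (Fs (c t) x).re) := by
    intro T hT
    refine Complex.reCLM.contDiff.comp_contDiffOn (contDiffOn_infty.2 fun n => ?_)
    exact Fs_contDiffOn isOpen_Ioo isPreconnected_Ioo n (hRDn T hT n)
  refine ⟨fun t x => (Fs (c t) x).re, ⟨?_, ?_, ?_⟩, ?_, ?_⟩
  · rintro ⟨t, x⟩ ⟨ht, _⟩
    have ht : a < t := ht
    have h1 : (t, x) ∈ Set.Ioo a (t + 1) ×ˢ (Set.univ : Set (Fin d → ℝ)) :=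
      ⟨⟨ht, by linarith⟩, trivial⟩
    exact ((hsm (t + 1) (by linarith)).contDiffAt isOpen_Ioo h1.1 x).contDiffWithinAt
  · intro t _ x l
    simp only [Fs_per]
  · intro t ht x
    have ht : a < t := ht
    have haT : a ≤ t + 1 := by linarith
    have htI : t ∈ Set.Ioo a (t + 1) := ⟨ht, by linarith⟩
    have htI' := Set.Ioo_subset_Icc_self htI
    have hn1 := hRDn (t + 1) haT 1
    have hrd := hn1.rd
    have hB := (Bop_RDn isOpen_Ioo isPreconnected_Ioo (fun i => hU' (t + 1) i 0)
      (hRDn (t + 1) haT 0)).rd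
    have r1 : RD (Set.Ioo a (t+1)) (fun t k => -(lam κ k : ℂ) * c t k) := hrd.mulk (lam_le hκ.le)
    have r2 : RD (Set.Ioo a (t+1)) (fun t k => (-1) * Bop (fun i => U i t) (c t) k) :=
      hB.mulk (p := fun _ => -1) (C := 1) (q := 0) (fun k => by simp)
    rw [dt_Fs isOpen_Ioo isPreconnected_Ioo hrd (r1.add r2)
      (fun r hr k => cs_hasDerivAt hκ haT (hU (t+1)) hg' hr k) htI x]
    rw [RD.Fs_add r1 r2 htI]
    have e2 : Fs (fun k => (-1) * Bop (fun i => U i t) (c t) k) x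
        = - ∑ i, (v t x i : ℂ) * Fs (fun k => sy i k * c t k) x := by
      have : Fs (fun k => (-1) * Bop (fun i => U i t) (c t) k) x
          = - Fs (fun k => Bop (fun i => U i t) (c t) k) x := by
        unfold Fs
        simp only [neg_mul, one_mul, tsum_neg]
      rw [this]
      congr 1
      unfold Bop
      rw [RD.Fs_sum (I := Set.Ioo a (t+1)) (f := fun i t => cv (U i t) (fun j => sy i j * c t j)) Finset.univ
        (fun i _ => ((hU' (t+1) i 0).rd).cv (hrd.mulk (sy_le i))) htI x]
      refine Finset.sum_congr rfl fun i _ => ?_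
      have := RD.Fs_cv (hU' (t+1) i 0).rd (hrd.mulk (sy_le i)) htI x
      rw [this]
      congr 1
      exact hat_inv ((hv i).space (ha.trans ht)) (pv t (ha.trans ht) i) x
    have e1 : Fs (fun k => -(lam κ k : ℂ) * c t k) x
        = (ν : ℂ) * ∑ i, Fs (fun k => sy i k * (sy i k * c t k)) x := by
      rw [← RD.Fs_sum (I := Set.Ioo a (t+1)) (f := fun i t k => sy i k * (sy i k * c t k)) Finset.univ
        (fun i _ => (hrd.mulk (sy_le i)).mulk (sy_le i)) htI x]
      unfold Fs
      rw [← tsum_mul_left]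
      congr 1
      funext k
      simp only [lam, sy, hκdef, Finset.sum_mul, Finset.mul_sum]
      push_cast
      simp only [Finset.sum_mul, Finset.mul_sum, ← Finset.sum_neg_distrib]
      refine Finset.sum_congr rfl fun i _ => ?_
      linear_combination (-4 * π ^ 2 * ν * (k i) ^ 2 * c t k * ek k x : ℂ) * Complex.I_sq
    have p1 : ∀ i, ∀ y, pd d i (fun y => (Fs (c t) y).re) y = (Fs (fun k => sy i k * c t k) y).re :=
      fun i y => pd_Fs isOpen_Ioo isPreconnected_Ioo hn1 htI y i
    have p2 : ∀ i, pd d i (fun y => (Fs (fun k => sy i k * c t k) y).re) x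
        = (Fs (fun k => sy i k * (sy i k * c t k)) x).re := fun i =>
      pd_Fs isOpen_Ioo isPreconnected_Ioo (hn1.mulk (sy_le i)) htI x i
    unfold lap
    simp only [p1, p2, e1, e2]
    rw [Complex.add_re, Complex.re_ofReal_mul, Complex.neg_re, Complex.re_sum, Complex.re_sum]
    simp only [Complex.re_ofReal_mul]
    ring
  · rintro ⟨t, x⟩ ⟨ht, _⟩
    have ht : a ≤ t := ht
    have h1 := (hRD (t + 1) (by linarith)).Fs_contOn (t, x) ⟨⟨ht, by linarith⟩, trivial⟩
    have h2 := Complex.continuous_re.continuousAt.comp_continuousWithinAt h1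
    refine h2.mono_of_mem_nhdsWithin ?_
    have : Set.Iio (t + 1) ×ˢ (Set.univ : Set (Fin d → ℝ)) ∈ nhds (t, x) :=
      (isOpen_Iio.prod isOpen_univ).mem_nhds ⟨by simp, trivial⟩
    filter_upwards [mem_nhdsWithin_of_mem_nhds this, self_mem_nhdsWithin] with p hp hp'
    exact ⟨⟨hp'.1, le_of_lt hp.1⟩, trivial⟩
  · funext x
    simp only [hc, cs_start, hat_inv hg pg, Complex.ofReal_re]

end partG

section partH
variable {d : ℕ} {a b ν : ℝ} {v : ℝ → (Fin d → ℝ) → (Fin d → ℝ)} {φ : ℝ → (Fin d → ℝ) → ℝ}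

theorem cont_param {G : ℝ → (Fin d → ℝ) → ℝ}
    (hG : ContinuousOn (fun p : ℝ × (Fin d → ℝ) => G p.1 p.2) (Set.Icc a b ×ˢ Set.univ)) :
    ContinuousOn (fun t => ∫ x in Set.Icc (0 : Fin d → ℝ) 1, G t x) (Set.Icc a b) := by
  obtain ⟨C, hC⟩ := ((isCompact_Icc (a := a) (b := b)).prod
    (isCompact_Icc (a := (0 : Fin d → ℝ)) (b := 1))).exists_bound_of_continuousOn
      (hG.mono (Set.prod_mono subset_rfl (Set.subset_univ _)))
  have hx : ∀ t ∈ Set.Icc a b, Continuous (G t) := fun t ht => by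
    rw [← continuousOn_univ]
    exact hG.comp (f := fun x : Fin d → ℝ => ((t, x) : ℝ × (Fin d → ℝ)))
      (by fun_prop) (fun x _ => ⟨ht, trivial⟩)
  refine continuousOn_of_dominated (bound := fun _ => C) ?_ ?_ ?_ ?_
  · exact fun t ht => (hx t ht).aestronglyMeasurable
  · intro t ht
    refine (ae_restrict_mem measurableSet_Icc).mono fun x hx => hC (t, x) ⟨ht, hx⟩
  · exact cont_intOn continuous_const
  · refine Eventually.of_forall fun x => ?_
    exact hG.comp (f := fun t : ℝ => ((t, x) : ℝ × (Fin d → ℝ)))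
      (by fun_prop) (fun t ht => ⟨ht, trivial⟩)

theorem energy_le (hab : a ≤ b) (hν : 0 ≤ ν)
    (hc : ContinuousOn (fun p : ℝ × (Fin d → ℝ) => φ p.1 p.2) (Set.Icc a b ×ˢ Set.univ))
    (h : IsSol d ν v (Set.Ioo a b) φ) (hv : IsDrift d v (Set.Ioo a b)) :
    En d (φ b) ≤ En d (φ a) := by
  have hE := fun t ht => h.energy_deriv isOpen_Ioo hν hv (t := t) ht
  refine antitoneOn_of_deriv_nonpos (convex_Icc a b) (f := fun t => En d (φ t))
    (cont_param (G := fun t x => φ t x ^ 2) (hc.pow 2)) ?_ ?_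
    (Set.left_mem_Icc.2 hab) (Set.right_mem_Icc.2 hab) hab
  · rw [interior_Icc]
    intro t ht
    obtain ⟨D, _, hD⟩ := hE t ht
    exact hD.differentiableAt.differentiableWithinAt
  · rw [interior_Icc]
    intro t ht
    obtain ⟨D, h0, hD⟩ := hE t ht
    rwa [hD.deriv]

theorem weak_lower (hab : a ≤ b)
    (hc : ContinuousOn (fun p : ℝ × (Fin d → ℝ) => φ p.1 p.2) (Set.Icc a b ×ˢ Set.univ))
    (h : IsSol d ν v (Set.Ioo a b) φ) (hv : IsDrift d v (Set.Ioo a b))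
    {ψ : (Fin d → ℝ) → ℝ} (hψ : ContDiff ℝ (⊤ : ℕ∞) ψ) (pψ : PeriodicIn d ψ) {C : ℝ}
    (hC : ∀ t ∈ Set.Ioo a b, C ≤ ∫ x in Set.Icc (0 : Fin d → ℝ) 1,
        φ t x * (ν * lap d ψ x + ∑ i, v t x i * pd d i ψ x)) :
    C * (b - a) ≤ (∫ x in Set.Icc (0 : Fin d → ℝ) 1, ψ x * φ b x)
      - ∫ x in Set.Icc (0 : Fin d → ℝ) 1, ψ x * φ a x := by
  have hE := fun t ht => h.weak_deriv isOpen_Ioo hv hψ pψ (t := t) ht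
  refine Convex.mul_sub_le_image_sub_of_le_deriv (convex_Icc a b)
    (f := fun t => ∫ x in Set.Icc (0 : Fin d → ℝ) 1, ψ x * φ t x)
    (cont_param (G := fun t x => ψ x * φ t x)
      ((hψ.continuous.comp continuous_snd).continuousOn.mul hc)) ?_ ?_
    _ (Set.left_mem_Icc.2 hab) _ (Set.right_mem_Icc.2 hab) hab
  · rw [interior_Icc]
    intro t ht
    exact (hE t ht).differentiableAt.differentiableWithinAt
  · rw [interior_Icc]
    intro t ht
    rw [(hE t ht).deriv]
    exact hC t ht

theorem pd_const (c : ℝ) (i : Fin d) (x : Fin d → ℝ) : pd d i (fun _ => c) x = 0 := by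
  simp [pd]

theorem mean_eq (hab : a ≤ b)
    (hc : ContinuousOn (fun p : ℝ × (Fin d → ℝ) => φ p.1 p.2) (Set.Icc a b ×ˢ Set.univ))
    (h : IsSol d ν v (Set.Ioo a b) φ) (hv : IsDrift d v (Set.Ioo a b)) :
    (∫ x in Set.Icc (0 : Fin d → ℝ) 1, φ b x) = ∫ x in Set.Icc (0 : Fin d → ℝ) 1, φ a x := by
  have h1 : ∀ c : ℝ, _ := fun c => weak_lower hab hc h hv (ψ := fun _ => c) contDiff_const
    (fun _ _ => rfl) (C := 0) (fun t _ => by simp [lap, pd_const])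
  have h2 := h1 1
  have h3 := h1 (-1)
  simp only [zero_mul, one_mul, neg_mul, integral_neg] at h2 h3
  linarith

theorem L2norm_eq (f : (Fin d → ℝ) → ℝ) : L2norm d f = √(En d f) := rfl

/-- The relaxation hypothesis. -/
def REH (d : ℕ) (u : ℝ → (Fin d → ℝ) → (Fin d → ℝ)) (τ : ℝ → ℝ) : Prop :=
  ∀ ν > (0:ℝ), ∀ s ≥ (0:ℝ), ∀ θ : ℝ → (Fin d → ℝ) → ℝ,
      ContDiffOn ℝ (⊤ : ℕ∞) (fun p : ℝ × (Fin d → ℝ) => θ p.1 p.2) (Set.Ici s ×ˢ Set.univ) →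
      (∀ t ∈ Set.Ici s, PeriodicIn d (θ t)) →
      (∀ t ∈ Set.Ici s, ∫ x in Set.Icc (0 : Fin d → ℝ) 1, θ t x = 0) →
      (∀ t ∈ Set.Ici s, ∀ x,
        derivWithin (fun r => θ r x) (Set.Ici s) t - ν * lap d (θ t) x
          + ∑ i, u t x i * pd d i (θ t) x = 0) →
      L2norm d (θ (s + τ ν)) ≤ (1/2) * L2norm d (θ s)

/-- The full set of hypotheses on the drift. -/
structure Hyp (d : ℕ) (u : ℝ → (Fin d → ℝ) → (Fin d → ℝ)) (τ : ℝ → ℝ) : Prop where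
  sm : ∀ i, Sm (Set.Ioi 0) (fun t x => u t x i)
  dr : IsDrift d u (Set.Ioi 0)
  bd : ∃ M : ℝ, 0 ≤ M ∧ ∀ t ∈ Set.Ioc (0:ℝ) 2, ∀ x, ∀ i, |u t x i| ≤ M
  re : REH d u τ
  pos : ∀ ν > 0, 0 < τ ν

variable {u : ℝ → (Fin d → ℝ) → (Fin d → ℝ)} {τ : ℝ → ℝ}

theorem IsDrift.mono {I J : Set ℝ} (h : IsDrift d v I) (hJ : J ⊆ I) : IsDrift d v J :=
  ⟨fun t ht => h.sm t (hJ ht), fun t ht => h.per t (hJ ht), fun t ht => h.div t (hJ ht)⟩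

theorem IsSol.mono {I J : Set ℝ} (h : IsSol d ν v I φ) (hJ : J ⊆ I) : IsSol d ν v J φ :=
  ⟨h.sm.mono hJ, fun t ht => h.per t (hJ ht), fun t ht => h.eq t (hJ ht)⟩

theorem Hyp.apply (H : Hyp d u τ) (hν : 0 < ν) (ha : 0 < a) (h : IsSol d ν u (Set.Ioi a) φ)
    (hm : ∀ t ∈ Set.Ioi a, ∫ x in Set.Icc (0 : Fin d → ℝ) 1, φ t x = 0) {s : ℝ} (hs : a < s) :
    En d (φ (s + τ ν)) ≤ 1/4 * En d (φ s) := by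
  have hsub : Set.Ici s ⊆ Set.Ioi a := fun t ht => lt_of_lt_of_le hs ht
  have key := H.re ν hν s (ha.trans hs).le φ (h.sm.mono hsub) (fun t ht => h.per t (hsub ht))
    (fun t ht => hm t (hsub ht)) (fun t ht x => by
      have h1 := (h.sm.hasDeriv' isOpen_Ioi (hsub ht) x)
      rw [h1.hasDerivWithinAt.derivWithin (uniqueDiffOn_Ici s t ht), h.eq t (hsub ht) x]
      ring)
  rw [L2norm_eq, L2norm_eq] at key
  have h0 := Real.sqrt_nonneg (En d (φ (s + τ ν)))
  have h2 := mul_self_le_mul_self h0 key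
  rw [Real.mul_self_sqrt (En_nonneg _)] at h2
  have h3 := Real.mul_self_sqrt (En_nonneg (d := d) (φ s))
  nlinarith

/-- Halving for solutions defined only on a bounded interval. -/
theorem Hyp.half (H : Hyp d u τ) (hν : 0 < ν) (ha : 0 < a) {θ : ℝ → (Fin d → ℝ) → ℝ}
    (h : IsSol d ν u (Set.Ioo a b) θ)
    (hm : ∀ t ∈ Set.Ioo a b, ∫ x in Set.Icc (0 : Fin d → ℝ) 1, θ t x = 0) {s : ℝ} (hs : a < s)
    (hb : s + τ ν < b) :
    En d (θ (s + τ ν)) ≤ 1/4 * En d (θ s) := by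
  have hτ := H.pos ν hν
  set a' := (a + s) / 2 with ha'
  have h1 : a < a' := by linarith
  have h2 : a' < s := by linarith
  have ha'I : a' ∈ Set.Ioo a b := ⟨h1, by linarith⟩
  obtain ⟨φ, hφ, hcφ, hφa⟩ := exists_sol hν (ha.trans h1) H.sm H.dr.per
    (h.sm.space ha'I) (h.per a' ha'I)
  have heq : ∀ t ∈ Set.Ioo a' b, En d (θ t) = En d (φ t) := by
    intro t ht
    have hsubo : Set.Ioo a' t ⊆ Set.Ioo a b := Set.Ioo_subset_Ioo h1.le ht.2.le
    have hsubc : Set.Icc a' t ⊆ Set.Ioo a b := fun r hr =>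
      ⟨h1.trans_le hr.1, hr.2.trans_lt ht.2⟩
    have hw := energy_le (a := a') (b := t) (φ := fun t x => θ t x - φ t x) ht.1.le hν.le
      (ContinuousOn.sub (h.sm.continuousOn.mono (Set.prod_mono hsubc subset_rfl))
        (hcφ.mono (Set.prod_mono Set.Icc_subset_Ici_self subset_rfl)))
      ((h.mono hsubo).sub isOpen_Ioo (hφ.mono Set.Ioo_subset_Ioi_self))
      (H.dr.mono fun r hr => ha.trans (hsubo hr).1)
    have hz : En d (fun x => θ a' x - φ a' x) = 0 := by simp [hφa, En]
    rw [hz] at hw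
    have ht' : t ∈ Set.Ioo a b := ⟨h1.trans ht.1, ht.2⟩
    have cθ := (h.sm.space ht').continuous
    have cφ := (hφ.sm.space (t := t) ht.1).continuous
    have h0 : ∫ x in Set.Icc (0 : Fin d → ℝ) 1, (θ t x - φ t x) ^ 2 = 0 :=
      le_antisymm hw (En_nonneg _)
    have hIntg : IntegrableOn (fun x => (θ t x - φ t x) ^ 2) (Set.Icc (0 : Fin d → ℝ) 1) :=
      cont_intOn (by fun_prop)
    have h0 := (integral_eq_zero_iff_of_nonneg (fun x => sq_nonneg (θ t x - φ t x)) hIntg).1 h0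
    refine integral_congr_ae ?_
    filter_upwards [h0] with x hx
    have : θ t x - φ t x = 0 := by simpa using hx
    rw [sub_eq_zero.1 this]
  have hmean : ∀ t ∈ Set.Ioi a', ∫ x in Set.Icc (0 : Fin d → ℝ) 1, φ t x = 0 := by
    intro t ht
    have ht : a' < t := ht
    rw [mean_eq (a := a') (b := t) ht.le (hcφ.mono (Set.prod_mono Set.Icc_subset_Ici_self subset_rfl))
      (hφ.mono Set.Ioo_subset_Ioi_self) (H.dr.mono fun r hr => (ha.trans h1).trans hr.1), hφa]
    exact hm a' ha'I
  rw [heq s ⟨h2, by linarith⟩, heq (s + τ ν) ⟨by linarith, hb⟩]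
  exact H.apply hν (ha.trans h1) hφ hmean h2

theorem cos_facts (i : Fin d) : ∃ ψ : (Fin d → ℝ) → ℝ, ContDiff ℝ (⊤ : ℕ∞) ψ ∧ PeriodicIn d ψ ∧
    (∫ x in Set.Icc (0 : Fin d → ℝ) 1, ψ x = 0) ∧ En d ψ = 1/2 := by
  have hpi := Real.pi_pos
  have hder : ∀ (c : ℝ) (x : Fin d → ℝ), pd d i (fun y => Real.sin (c * y i)) x
      = c * Real.cos (c * x i) := by
    intro c x
    have h1 : HasFDerivAt (fun y : Fin d → ℝ => c * y i)
        (c • (ContinuousLinearMap.proj (R := ℝ) (φ := fun _ : Fin d => ℝ) i)) x :=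
      ((ContinuousLinearMap.proj (R := ℝ) (φ := fun _ : Fin d => ℝ) i).hasFDerivAt).const_mul c
    unfold pd
    rw [h1.sin.fderiv]
    simp [mul_comm]
  have hsm : ∀ c : ℝ, ContDiff ℝ (⊤ : ℕ∞) (fun y : Fin d → ℝ => Real.sin (c * y i)) := by
    intro c; fun_prop
  have hper : ∀ n : ℕ, PeriodicIn d (fun y => Real.sin ((n * (2 * π)) * y i)) := by
    intro n x k
    have : (n * (2 * π)) * ((x + fun i => (k i : ℝ)) i) = (n * (2 * π)) * x i + ((n * k i : ℤ) : ℝ) * (2 * π) := by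
      simp only [Pi.add_apply]; push_cast; ring
    simp only [this]
    exact Real.sin_add_int_mul_two_pi _ _
  have hz : ∀ n : ℕ, n ≠ 0 → ∫ x in Set.Icc (0 : Fin d → ℝ) 1, Real.cos ((n * (2 * π)) * x i) = 0 := by
    intro n hn
    have := integral_pd_zero (hsm (n * (2 * π))) (hper n) i
    simp only [hder] at this
    rw [integral_const_mul] at this
    have hne : (n * (2 * π) : ℝ) ≠ 0 := by positivity
    exact (mul_eq_zero.1 this).resolve_left hne
  refine ⟨fun x => Real.cos (2 * π * x i), by fun_prop, ?_, ?_, ?_⟩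
  · intro x k
    have : 2 * π * ((x + fun i => (k i : ℝ)) i) = 2 * π * x i + (k i : ℝ) * (2 * π) := by
      simp only [Pi.add_apply]; ring
    simp only [this]
    exact Real.cos_add_int_mul_two_pi _ _
  · simpa using hz 1 one_ne_zero
  · unfold En
    have h2 := hz 2 two_ne_zero
    have e : ∀ x : Fin d → ℝ, Real.cos (2 * π * x i) ^ 2
        = 1/2 + 1/2 * Real.cos (((2:ℕ) * (2 * π)) * x i) := by
      intro x
      rw [Real.cos_sq]
      have : 2 * (2 * π * x i) = ((2:ℕ) * (2 * π)) * x i := by push_cast; ring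
      rw [this]; ring
    simp only [e]
    rw [integral_add (cont_intOn continuous_const) (cont_intOn (by fun_prop)), integral_const_mul, h2]
    simp [Measure.real, Real.volume_Icc_pi]

theorem Hyp.tau_lower (H : Hyp d u τ) (hd : 1 ≤ d) :
    ∃ κ > 0, ∀ ν, 0 < ν → ν ≤ 1 → κ ≤ τ ν := by
  obtain ⟨ψ, hψ, pψ, mψ, eψ⟩ := cos_facts (⟨0, hd⟩ : Fin d)
  obtain ⟨M, hM0, hM⟩ := H.bd
  have hlap : Continuous (fun x => lap d ψ x) :=
    continuous_finsetSum _ fun i _ => (contDiff_pd (contDiff_pd hψ i) i).continuous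
  obtain ⟨L, hL⟩ := (isCompact_Icc (a := (0 : Fin d → ℝ)) (b := 1)).exists_bound_of_continuousOn
    hlap.continuousOn
  choose P hP using fun i => (isCompact_Icc (a := (0 : Fin d → ℝ)) (b := 1)).exists_bound_of_continuousOn
    (contDiff_pd hψ i).continuous.continuousOn
  set Q := |L| + ∑ i, M * |P i| + 1 with hQ
  have hQ0 : 0 < Q := by
    have : 0 ≤ ∑ i, M * |P i| := Finset.sum_nonneg fun i _ => by positivity
    have := abs_nonneg L
    linarith
  set κ := min (1/2) (1 / (16 * Q)) with hκ
  have hκ0 : 0 < κ := by positivity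
  refine ⟨κ, hκ0, fun ν hν hν1 => ?_⟩
  by_contra! hlt
  have hτ := H.pos ν hν
  have hκ1 : κ ≤ 1/2 := min_le_left _ _
  have hκ2 : κ ≤ 1 / (16 * Q) := min_le_right _ _
  set a := 1 - κ with ha
  have ha0 : 0 < a := by linarith
  obtain ⟨φ, hφ, hcφ, hφa⟩ := exists_sol hν ha0 H.sm H.dr.per hψ pψ
  have hcc : ∀ t, ContinuousOn (fun p : ℝ × (Fin d → ℝ) => φ p.1 p.2) (Set.Icc a t ×ˢ Set.univ) :=
    fun t => hcφ.mono (Set.prod_mono Set.Icc_subset_Ici_self subset_rfl)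
  have hso : ∀ t, IsSol d ν u (Set.Ioo a t) φ := fun t => hφ.mono Set.Ioo_subset_Ioi_self
  have hdr : ∀ t, IsDrift d u (Set.Ioo a t) := fun t => H.dr.mono fun r hr => ha0.trans hr.1
  have hen : ∀ t, a ≤ t → En d (φ t) ≤ 1/2 := fun t ht => by
    have := energy_le ht hν.le (hcc t) (hso t) (hdr t)
    rwa [hφa, eψ] at this
  have hmean : ∀ t ∈ Set.Ioi a, ∫ x in Set.Icc (0 : Fin d → ℝ) 1, φ t x = 0 := by
    intro t ht
    have ht : a < t := ht
    rw [mean_eq ht.le (hcc t) (hso t) (hdr t), hφa, mψ]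
  have h1 := H.apply hν ha0 hφ hmean (s := 1) (by linarith)
  have h2 := hen 1 (by linarith)
  have hcont : ∀ t, a < t → Continuous (φ t) := fun t ht => (hφ.sm.space (t := t) ht).continuous
  have hlow := weak_lower (a := a) (b := 1 + τ ν) (by linarith) (hcc _) (hso _) (hdr _) hψ pψ
    (C := - (2 * Q)) (fun t ht => by
      have ht2 : t ∈ Set.Ioc (0:ℝ) 2 := ⟨ha0.trans ht.1, by linarith [ht.2]⟩
      have hb : ∀ x ∈ Set.Icc (0 : Fin d → ℝ) 1,
          ‖φ t x * (ν * lap d ψ x + ∑ i, u t x i * pd d i ψ x)‖ ≤ Q * (1 + φ t x ^ 2) := by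
        intro x hx
        have b1 : |ν * lap d ψ x + ∑ i, u t x i * pd d i ψ x| ≤ Q := by
          have c1 : |ν * lap d ψ x| ≤ |L| := by
            rw [abs_mul, abs_of_pos hν]
            have := (hL x hx).trans (le_abs_self L)
            rw [Real.norm_eq_abs] at this
            nlinarith [abs_nonneg (lap d ψ x)]
          have c2 : |∑ i, u t x i * pd d i ψ x| ≤ ∑ i, M * |P i| := by
            refine (Finset.abs_sum_le_sum_abs _ _).trans (Finset.sum_le_sum fun i _ => ?_)
            rw [abs_mul]
            have := (hP i x hx).trans (le_abs_self (P i))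
            exact mul_le_mul (hM t ht2 x i) this (abs_nonneg _) hM0
          have := abs_add_le (ν * lap d ψ x) (∑ i, u t x i * pd d i ψ x)
          linarith
        rw [norm_mul, mul_comm, Real.norm_eq_abs, Real.norm_eq_abs]
        have b2 : |φ t x| ≤ 1 + φ t x ^ 2 := by
          rw [← sq_abs]; nlinarith [sq_nonneg (|φ t x| - 1), abs_nonneg (φ t x)]
        exact mul_le_mul b1 b2 (abs_nonneg _) hQ0.le
      have hc := hcont t ht.1
      have hi : IntegrableOn (fun x => Q * (1 + φ t x ^ 2)) (Set.Icc (0 : Fin d → ℝ) 1) :=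
        cont_intOn (by fun_prop)
      have := norm_integral_le_of_norm_le hi
        ((ae_restrict_mem measurableSet_Icc).mono hb)
      have e2 : ∫ x in Set.Icc (0 : Fin d → ℝ) 1, Q * (1 + φ t x ^ 2) = Q * (1 + En d (φ t)) := by
        rw [integral_const_mul, integral_add (cont_intOn continuous_const)
          (cont_intOn (by fun_prop))]
        simp [En, Measure.real, Real.volume_Icc_pi]
      rw [e2, Real.norm_eq_abs] at this
      have h3 := hen t ht.1.le
      have h4 := (abs_le.1 this).1
      nlinarith)
  have hup : ∫ x in Set.Icc (0 : Fin d → ℝ) 1, ψ x * φ (1 + τ ν) x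
      ≤ 1/4 * En d ψ + En d (φ (1 + τ ν)) := by
    have hc := hcont (1 + τ ν) (by linarith)
    have hcψ := hψ.continuous
    unfold En
    rw [← integral_const_mul, ← integral_add (cont_intOn (by fun_prop)) (cont_intOn (by fun_prop))]
    refine integral_mono (cont_intOn (by fun_prop)) (cont_intOn (by fun_prop)) fun x => ?_
    simp only
    nlinarith [sq_nonneg (ψ x / 2 - φ (1 + τ ν) x)]
  have hself : ∫ x in Set.Icc (0 : Fin d → ℝ) 1, ψ x * φ a x = 1/2 := by
    rw [← eψ, hφa]; unfold En; congr 1; funext x; ring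
  rw [hself] at hlow
  rw [eψ] at hup
  have h5 : Q * κ ≤ 1/16 := by
    calc Q * κ ≤ Q * (1 / (16 * Q)) := by gcongr
      _ = 1/16 := by field_simp
  have h6 : Q * τ ν < 1 / 16 := lt_of_lt_of_le (mul_lt_mul_of_pos_left hlt hQ0) h5
  have h7 : 1 + τ ν - a = τ ν + κ := by rw [ha]; ring
  rw [h7] at hlow
  nlinarith

end partH

section partG

/-- Dyadic times `1 - 2^{-n}`. -/
noncomputable def dy (n : ℕ) : ℝ := 1 - (1/2 : ℝ) ^ n

theorem dy_mono : Monotone dy := by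
  intro m n h
  unfold dy
  have := pow_le_pow_of_le_one (by norm_num : (0:ℝ) ≤ 1/2) (by norm_num) h
  linarith

theorem dy_lt (n : ℕ) : dy n < 1 := by
  unfold dy
  have : (0:ℝ) < (1/2) ^ n := by positivity
  linarith

theorem dy_succ (n : ℕ) : dy (n + 1) = dy n + (1/2) ^ n / 2 := by
  unfold dy; rw [pow_succ]; ring

theorem dy_zero : dy 0 = 0 := by simp [dy]

theorem dy_nonneg (n : ℕ) : 0 ≤ dy n := by
  rw [← dy_zero]; exact dy_mono (Nat.zero_le n)

theorem dy_tendsto : Tendsto dy atTop (nhds 1) := by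
  have := (tendsto_pow_atTop_nhds_zero_of_lt_one (by norm_num : (0:ℝ) ≤ 1/2)
    (by norm_num)).const_sub 1
  rw [sub_zero] at this
  exact this

theorem exists_dy_gt {t : ℝ} (ht : t < 1) : ∃ n, t < dy (n + 1) := by
  obtain ⟨n, hn⟩ := (dy_tendsto.eventually (lt_mem_nhds ht)).exists
  exact ⟨n, hn.trans_le (dy_mono n.le_succ)⟩

/-- start of the plateau in the `n`-th dyadic interval -/
noncomputable def ds (n : ℕ) : ℝ := dy n + (1/2) ^ n / 4

theorem exists_speed (c : ℕ → ℝ) (hc : Monotone c) :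
    ∃ h : ℝ → ℝ, ContDiffOn ℝ (⊤ : ℕ∞) h (Set.Iio 1) ∧ (∀ t < 1, c 0 ≤ h t) ∧
      (∀ n, ∀ t ≤ dy (n + 1), h t ≤ c n) ∧
      (∀ n, ∀ t ∈ Set.Icc (ds n) (dy (n + 1)), h t = c n) := by
  let g : ℕ → ℝ → ℝ := fun k t => (c (k + 1) - c k) * Real.smoothTransition (2 ^ (k + 3) * (t - dy (k + 1)))
  have hdc : ∀ k, 0 ≤ c (k + 1) - c k := fun k => sub_nonneg.2 (hc k.le_succ)
  have hg0 : ∀ k t, 0 ≤ g k t := fun k t => mul_nonneg (hdc k) (Real.smoothTransition.nonneg _)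
  have hg1 : ∀ k t, g k t ≤ c (k + 1) - c k := fun k t =>
    mul_le_of_le_one_right (hdc k) (Real.smoothTransition.le_one _)
  have hfin : ∀ N t, t ≤ dy (N + 1) → ∑' k, g k t = ∑ k ∈ Finset.range N, g k t := by
    intro N t ht
    refine tsum_eq_sum fun k hk => ?_
    have hk : N ≤ k := by simpa using hk
    have : t ≤ dy (k + 1) := ht.trans (dy_mono (by omega))
    simp only [g]
    rw [Real.smoothTransition.zero_of_nonpos, mul_zero]
    exact mul_nonpos_of_nonneg_of_nonpos (by positivity) (by linarith)
  refine ⟨fun t => c 0 + ∑' k, g k t, ?_, ?_, ?_, ?_⟩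
  · intro t ht
    obtain ⟨N, hN⟩ := exists_dy_gt ht
    have h1 : ContDiffAt ℝ (⊤ : ℕ∞) (fun t => c 0 + ∑ k ∈ Finset.range N, g k t) t := by
      refine contDiffAt_const.add (ContDiffAt.sum fun k _ => ?_)
      refine contDiffAt_const.mul ?_
      exact (Real.smoothTransition.contDiff.comp
        (contDiff_const.mul (contDiff_id.sub contDiff_const))).contDiffAt
    refine (h1.congr_of_eventuallyEq ?_).contDiffWithinAt
    filter_upwards [gt_mem_nhds hN] with r hr
    rw [hfin N r hr.le]
  · intro t ht
    have : 0 ≤ ∑' k, g k t := tsum_nonneg fun k => hg0 k t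
    linarith
  · intro n t ht
    have h1 : ∑ k ∈ Finset.range n, g k t ≤ ∑ k ∈ Finset.range n, (c (k + 1) - c k) :=
      Finset.sum_le_sum fun k _ => hg1 k t
    rw [Finset.sum_range_sub] at h1
    simp only [hfin n t ht]
    linarith
  · intro n t ht
    have h1 : ∑ k ∈ Finset.range n, g k t = ∑ k ∈ Finset.range n, (c (k + 1) - c k) := by
      refine Finset.sum_congr rfl fun k hk => ?_
      have hk : k + 1 ≤ n := by simpa using hk
      simp only [g]
      rw [Real.smoothTransition.one_of_one_le, mul_one]
      have h2 := pow_le_pow_of_le_one (by norm_num : (0:ℝ) ≤ 1/2) (by norm_num) hk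
      have h3 := ht.1
      have h4 : (1/2:ℝ) ^ (k + 1) / 4 ≤ t - dy (k + 1) := by
        unfold ds dy at h3; unfold dy; linarith
      have h5 : (1:ℝ) = 2 ^ (k + 3) * ((1/2:ℝ) ^ (k + 1) / 4) := by
        rw [one_div, inv_pow]; field_simp; ring
      rw [h5]; gcongr
    rw [Finset.sum_range_sub] at h1
    simp only [hfin n t ht.2, h1]
    ring

theorem exists_sigma (c : ℕ → ℝ) (hc : Monotone c) :
    ∃ σ : ℝ → ℝ, σ 0 = 0 ∧ ContDiffOn ℝ (⊤ : ℕ∞) σ (Set.Iio 1) ∧ (∀ t < 1, c 0 ≤ deriv σ t) ∧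
      (∀ n, ∀ t ≤ dy (n + 1), deriv σ t ≤ c n) ∧
      (∀ n, ∀ t ∈ Set.Icc (ds n) (dy (n + 1)), deriv σ t = c n) := by
  obtain ⟨h, hs, h1, h2, h3⟩ := exists_speed c hc
  have hd : ∀ t < 1, HasDerivAt (fun t => ∫ r in (0:ℝ)..t, h r) (h t) t := by
    intro t ht
    have hsub : Set.uIcc 0 t ⊆ Set.Iio (1:ℝ) := by
      intro r hr
      rcases Set.mem_uIcc.1 hr with h | h
      · exact h.2.trans_lt ht
      · exact h.2.trans_lt one_pos
    refine intervalIntegral.integral_hasDerivAt_right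
      (hs.continuousOn.mono hsub).intervalIntegrable
      (hs.continuousOn.stronglyMeasurableAtFilter isOpen_Iio t ht)
      (hs.continuousOn.continuousAt (Iio_mem_nhds ht))
  have hlt : ∀ n, dy (n + 1) < 1 := fun n => dy_lt _
  refine ⟨fun t => ∫ r in (0:ℝ)..t, h r, by simp, ?_, ?_, ?_, ?_⟩
  · rw [contDiffOn_infty_iff_deriv_of_isOpen isOpen_Iio]
    exact ⟨fun t ht => (hd t ht).differentiableAt.differentiableWithinAt,
      hs.congr fun t ht => (hd t ht).deriv⟩
  · intro t ht; rw [(hd t ht).deriv]; exact h1 t ht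
  · intro n t ht; rw [(hd t (ht.trans_lt (hlt n))).deriv]; exact h2 n t ht
  · intro n t ht; rw [(hd t (ht.2.trans_lt (hlt n))).deriv]; exact h3 n t ht

variable {σ : ℝ → ℝ} {c : ℕ → ℝ}

theorem sigma_affine (hσ : ContDiffOn ℝ (⊤ : ℕ∞) σ (Set.Iio 1)) (n : ℕ)
    (h : ∀ t ∈ Set.Icc (ds n) (dy (n + 1)), deriv σ t = c n) :
    ∀ t ∈ Set.Icc (ds n) (dy (n + 1)), σ t = σ (ds n) + c n * (t - ds n) := by
  have hd : ∀ t ∈ Set.Icc (ds n) (dy (n + 1)), HasDerivAt (fun t => σ t - c n * (t - ds n)) 0 t := by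
    intro t ht
    have h1 := (((hσ.contDiffAt (Iio_mem_nhds (ht.2.trans_lt (dy_lt _)))).differentiableAt
      (by simp)).hasDerivAt)
    rw [h t ht] at h1
    have h2 := h1.fun_sub (((hasDerivAt_id t).sub_const (ds n)).const_mul (c n))
    simpa using h2
  intro t ht
  have := constant_of_has_deriv_right_zero (f := fun t => σ t - c n * (t - ds n))
    (fun t ht => (hd t ht).continuousAt.continuousWithinAt)
    (fun t ht => (hd t ⟨ht.1, ht.2.le⟩).hasDerivWithinAt) t ht
  simp at this
  linarith

theorem sigma_strictMono (hσ : ContDiffOn ℝ (⊤ : ℕ∞) σ (Set.Iio 1))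
    (hp : ∀ t < 1, 0 < deriv σ t) : StrictMonoOn σ (Set.Iio 1) := by
  refine strictMonoOn_of_deriv_pos (convex_Iio 1) hσ.continuousOn fun t ht => hp t ?_
  simpa using ht

theorem ds_mem (n : ℕ) : ds n ≤ dy (n + 1) := by
  have : (0:ℝ) < (1/2) ^ n := by positivity
  rw [dy_succ]; unfold ds; linarith

theorem sigma_bij (hσ : ContDiffOn ℝ (⊤ : ℕ∞) σ (Set.Iio 1)) (h0 : σ 0 = 0)
    (hp : ∀ t < 1, 0 < deriv σ t)
    (h : ∀ n, ∀ t ∈ Set.Icc (ds n) (dy (n + 1)), deriv σ t = c n)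
    {κ : ℝ} (hκ : 0 < κ) {N : ℕ} (hN : ∀ n ≥ N, κ ≤ c n * (1/2) ^ n / 4) :
    Set.BijOn σ (Set.Ico 0 1) (Set.Ici 0) := by
  have hm := sigma_strictMono hσ hp
  refine ⟨?_, hm.injOn.mono fun t ht => ht.2, ?_⟩
  · intro t ht
    have := hm.monotoneOn (show (0:ℝ) ∈ Set.Iio 1 by simp) ht.2 ht.1
    rwa [h0] at this
  · intro y hy
    have hstep : ∀ k : ℕ, k * κ ≤ σ (dy (N + k)) := by
      intro k
      induction k with
      | zero =>
        have := hm.monotoneOn (show (0:ℝ) ∈ Set.Iio 1 by simp) (dy_lt N) (dy_nonneg N)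
        simpa [h0] using this
      | succ k ih =>
        have e := sigma_affine hσ (N + k) (h (N + k)) (dy (N + k + 1)) ⟨ds_mem _, le_rfl⟩
        have hpw : (0:ℝ) < (1/2) ^ (N + k) := by positivity
        have e2 := hm.monotoneOn (dy_lt (N + k)) ((ds_mem (N + k)).trans_lt (dy_lt _))
          (show dy (N + k) ≤ ds (N + k) by unfold ds; linarith)
        have e3 : dy (N + k + 1) - ds (N + k) = (1/2) ^ (N + k) / 4 := by
          rw [dy_succ]; unfold ds; ring
        have e4 := hN (N + k) (by omega)
        rw [e3] at e
        push_cast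
        rw [← add_assoc]
        linarith
    obtain ⟨k, hk⟩ := exists_nat_gt (y / κ)
    have hk2 : y ≤ σ (dy (N + k)) := by
      have := (div_lt_iff₀ hκ).1 hk
      linarith [hstep k]
    have hc : ContinuousOn σ (Set.Icc 0 (dy (N + k))) :=
      hσ.continuousOn.mono fun t ht => ht.2.trans_lt (dy_lt _)
    obtain ⟨t, ht, rfl⟩ := intermediate_value_Icc (dy_nonneg _) hc ⟨by rw [h0]; exact hy, hk2⟩
    exact ⟨t, ⟨ht.1, ht.2.trans_lt (dy_lt _)⟩, rfl⟩

end partG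

section partK
variable {d : ℕ} {u : ℝ → (Fin d → ℝ) → (Fin d → ℝ)} {τ : ℝ → ℝ} {ν : ℝ} {σ : ℝ → ℝ}
  {θ : ℝ → (Fin d → ℝ) → ℝ} {c s : ℝ}

theorem IsSol.reparam {a b t₀ t₁ : ℝ} (hc : 0 < c) (hb : b = a + c * (t₁ - t₀))
    (hI : Set.Ioo t₀ t₁ ⊆ Set.Ioo s 1)
    (h : IsSol d ν (fun t x i => deriv σ t * u (σ t) x i) (Set.Ioo s 1) θ)
    (hσ : ∀ t ∈ Set.Ioo t₀ t₁, σ t = a + c * (t - t₀))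
    (hσ' : ∀ t ∈ Set.Ioo t₀ t₁, deriv σ t = c) :
    IsSol d (ν / c) u (Set.Ioo a b) (fun r x => θ (t₀ + (r - a) / c) x) := by
  have hmem : ∀ r ∈ Set.Ioo a b, t₀ + (r - a) / c ∈ Set.Ioo t₀ t₁ := by
    intro r hr
    have h1 : 0 < (r - a) / c := div_pos (by linarith [hr.1]) hc
    have h2 : (r - a) / c < t₁ - t₀ := by
      rw [div_lt_iff₀ hc]; linarith [hr.2]
    exact ⟨by linarith, by linarith⟩
  refine ⟨?_, fun r hr => h.per _ (hI (hmem r hr)), ?_⟩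
  · have h1 : ContDiffOn ℝ (⊤ : ℕ∞)
        (fun p : ℝ × (Fin d → ℝ) => ((t₀ + (p.1 - a) / c, p.2) : ℝ × (Fin d → ℝ)))
        (Set.Ioo a b ×ˢ Set.univ) := by
      apply ContDiff.contDiffOn
      fun_prop
    exact ContDiffOn.comp (g := fun p : ℝ × (Fin d → ℝ) => θ p.1 p.2) h.sm h1
      fun p hp => ⟨hI (hmem p.1 hp.1), trivial⟩
  · intro r hr x
    have hm := hmem r hr
    have h1 := h.sm.hasDeriv' isOpen_Ioo (hI hm) x
    have h2 : HasDerivAt (fun r : ℝ => t₀ + (r - a) / c) (1 / c) r :=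
      (((hasDerivAt_id r).sub_const a).div_const c).const_add t₀
    have h3 : HasDerivAt (fun r => θ (t₀ + (r - a) / c) x) _ r :=
      HasDerivAt.comp (h₂ := fun r => θ r x) r h1 h2
    rw [h3.deriv, h.eq _ (hI hm) x]
    have e : σ (t₀ + (r - a) / c) = r := by
      rw [hσ _ hm]; field_simp; ring
    simp only [hσ' _ hm, e, mul_assoc, ← Finset.mul_sum]
    field_simp

theorem plateau (H : Hyp d u τ) (hν : 0 < ν)
    (h : IsSol d ν (fun t x i => deriv σ t * u (σ t) x i) (Set.Ioo s 1) θ)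
    (hm : ∀ t ∈ Set.Ioo s 1, ∫ x in Set.Icc (0 : Fin d → ℝ) 1, θ t x = 0)
    (hE : AntitoneOn (fun t => En d (θ t)) (Set.Ioo s 1)) {n : ℕ} (hn : s < dy n) (hc : 0 < c)
    (hpos : 0 < σ (ds n))
    (hσ : ∀ t ∈ Set.Icc (ds n) (dy (n + 1)), σ t = σ (ds n) + c * (t - ds n))
    (hσ' : ∀ t ∈ Set.Icc (ds n) (dy (n + 1)), deriv σ t = c)
    (hτ : τ (ν / c) < c * (1/2) ^ n / 8) :
    En d (θ (dy (n + 1))) ≤ 1/4 * En d (θ (dy n)) := by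
  have hp : (0:ℝ) < (1/2) ^ n := by positivity
  have hlt := dy_lt (n + 1)
  have hds : ds n = dy n + (1/2) ^ n / 4 := rfl
  have hdy := dy_succ n
  have hτ0 := H.pos (ν / c) (by positivity)
  have hI : Set.Ioo (ds n) (dy (n + 1)) ⊆ Set.Ioo s 1 := fun t ht =>
    ⟨by linarith [ht.1], by linarith [ht.2]⟩
  have hsol := IsSol.reparam (a := σ (ds n)) hc rfl hI h
    (fun t ht => hσ t ⟨ht.1.le, ht.2.le⟩) (fun t ht => hσ' t ⟨ht.1.le, ht.2.le⟩)
  have hw : dy (n + 1) - ds n = (1/2) ^ n / 4 := by linarith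
  rw [hw] at hsol
  have hmem : ∀ r ∈ Set.Ioo (σ (ds n)) (σ (ds n) + c * ((1/2) ^ n / 4)),
      ds n + (r - σ (ds n)) / c ∈ Set.Ioo s 1 := by
    intro r hr
    have h1 : 0 < (r - σ (ds n)) / c := div_pos (by linarith [hr.1]) hc
    have h2 : (r - σ (ds n)) / c < (1/2) ^ n / 4 := by
      rw [div_lt_iff₀ hc]; linarith [hr.2]
    exact ⟨by linarith, by linarith⟩
  have hcp : 0 < c * (1/2) ^ n := by positivity
  have key := H.half (s := σ (ds n) + c * (1/2) ^ n / 16) (by positivity) hpos hsol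
    (fun r hr => hm _ (hmem r hr)) (by linarith) (by linarith)
  have e1 : ds n + (σ (ds n) + c * (1/2) ^ n / 16 - σ (ds n)) / c = ds n + (1/2) ^ n / 16 := by
    field_simp; ring
  simp only [e1] at key
  set t2 := ds n + (σ (ds n) + c * (1/2) ^ n / 16 + τ (ν / c) - σ (ds n)) / c with ht2
  have h3 : 0 < (σ (ds n) + c * (1/2) ^ n / 16 + τ (ν / c) - σ (ds n)) / c :=
    div_pos (by linarith) hc
  have h4 : (σ (ds n) + c * (1/2) ^ n / 16 + τ (ν / c) - σ (ds n)) / c < (1/2) ^ n / 4 := by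
    rw [div_lt_iff₀ hc]; linarith
  have k1 : En d (θ (dy (n + 1))) ≤ En d (θ t2) :=
    hE (show t2 ∈ Set.Ioo s 1 from ⟨by linarith, by linarith⟩)
      (show dy (n + 1) ∈ Set.Ioo s 1 from ⟨by linarith, by linarith⟩) (by linarith)
  have k2 : En d (θ (ds n + (1/2) ^ n / 16)) ≤ En d (θ (dy n)) :=
    hE (show dy n ∈ Set.Ioo s 1 from ⟨by linarith, by linarith⟩)
      (show ds n + (1/2) ^ n / 16 ∈ Set.Ioo s 1 from ⟨by linarith, by linarith⟩) (by linarith)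
  linarith

theorem decay {F : ℝ → ℝ} (h0 : ∀ t, 0 ≤ F t) (hF : AntitoneOn F (Set.Ioo s 1)) {N : ℕ}
    (hN : ∀ n ≥ N, s < dy n ∧ F (dy (n + 1)) ≤ 1/4 * F (dy n)) :
    Tendsto F (nhdsWithin 1 (Set.Iio 1)) (nhds 0) := by
  have hk : ∀ k, F (dy (N + k)) ≤ (1/4) ^ k * F (dy N) := by
    intro k
    induction k with
    | zero => simp
    | succ k ih =>
      have := (hN (N + k) (by omega)).2
      rw [← add_assoc, pow_succ]
      linarith
  have ht : Tendsto (fun k : ℕ => (1/4 : ℝ) ^ k * F (dy N)) atTop (nhds 0) := by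
    have := (tendsto_pow_atTop_nhds_zero_of_lt_one (by norm_num : (0:ℝ) ≤ 1/4)
      (by norm_num)).mul_const (F (dy N))
    rwa [zero_mul] at this
  rw [tendsto_order]
  refine ⟨fun a ha => Eventually.of_forall fun t => ha.trans_le (h0 t), fun a ha => ?_⟩
  obtain ⟨k, hka⟩ := (ht.eventually (gt_mem_nhds ha)).exists
  filter_upwards [Ioo_mem_nhdsLT (dy_lt (N + k))] with t ht
  have hs := (hN (N + k) (by omega)).1
  exact (hF ⟨hs, dy_lt _⟩ ⟨hs.trans ht.1, ht.2⟩ ht.1.le).trans_lt ((hk k).trans_lt hka)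

end partK

/-- Algebra for the number `y n = 2^{-n} / (4 (n+1))`. -/
noncomputable def yy (n : ℕ) : ℝ := (1/2 : ℝ) ^ n / (4 * ((n:ℝ) + 1))

theorem yy_pos (n : ℕ) : 0 < yy n := by unfold yy; positivity

theorem yy_anti : Antitone yy := by
  intro m n h
  unfold yy
  have := pow_le_pow_of_le_one (by norm_num : (0:ℝ) ≤ 1/2) (by norm_num) h
  have h2 : (m:ℝ) ≤ n := by exact_mod_cast h
  gcongr

theorem yy_tendsto : Tendsto yy atTop (nhds 0) := by
  have h := tendsto_pow_atTop_nhds_zero_of_lt_one (by norm_num : (0:ℝ) ≤ 1/2) (by norm_num)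
  refine squeeze_zero (fun n => (yy_pos n).le) (fun n => ?_) h
  unfold yy
  refine div_le_self (by positivity) ?_
  have : (0:ℝ) ≤ n := Nat.cast_nonneg n
  linarith

theorem exists_dyadic {t : ℝ} (h0 : 0 ≤ t) (h1 : t < 1) : ∃ n, dy n ≤ t ∧ t < dy (n + 1) := by
  classical
  have hex := exists_dy_gt h1
  refine ⟨Nat.find hex, ?_, Nat.find_spec hex⟩
  rcases Nat.eq_zero_or_pos (Nat.find hex) with h | h
  · rw [h, dy_zero]; exact h0
  · have := Nat.find_min hex (m := Nat.find hex - 1) (by omega)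
    rw [Nat.sub_add_cancel h] at this
    exact not_lt.1 this

theorem logb_lower {t : ℝ} (h1 : t < 1) {n : ℕ} (hn : dy n ≤ t) :
    (n:ℝ) ≤ |Real.logb 2 (1 - t)| := by
  have h2 : Real.logb 2 (1 - t) ≤ -n := by
    rw [Real.logb_le_iff_le_rpow (by norm_num) (by linarith), Real.rpow_neg (by norm_num),
      Real.rpow_natCast]
    unfold dy at hn
    rw [one_div, inv_pow] at hn
    linarith
  have := neg_abs_le (Real.logb 2 (1 - t))
  linarith

/-- The accelerating diffeomorphism can be chosen with a quantitative derivative bound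
in terms of the inverse of `f a = sup_{0 < b ≤ a} b * τ b`. -/
theorem accelerated_total_dissipation_general_bound
    (d : ℕ) (hd : 1 ≤ d)
    (u : ℝ → (Fin d → ℝ) → (Fin d → ℝ))
    (hu_smooth : ContDiffOn ℝ (⊤ : ℕ∞) (fun p : ℝ × (Fin d → ℝ) => u p.1 p.2)
      (Set.Ici (0:ℝ) ×ˢ Set.univ))
    (hu_per : ∀ t ∈ Set.Ici (0:ℝ), ∀ i : Fin d, PeriodicIn d (fun x => u t x i))
    (hu_bdd : ∀ T > (0:ℝ), ∃ M : ℝ, ∀ t ∈ Set.Icc (0:ℝ) T, ∀ x, ‖u t x‖ ≤ M)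
    (hu_div : ∀ t ∈ Set.Ici (0:ℝ), ∀ x, ∑ i, pd d i (fun y => u t y i) x = 0)
    (τ : ℝ → ℝ) (hτ_pos : ∀ ν > (0:ℝ), 0 < τ ν)
    (hτ_lim : Tendsto (fun ν => ν * τ ν) (nhdsWithin 0 (Set.Ioi 0)) (nhds 0))
    (hRE : ∀ ν > (0:ℝ), ∀ s ≥ (0:ℝ), ∀ θ : ℝ → (Fin d → ℝ) → ℝ,
      ContDiffOn ℝ (⊤ : ℕ∞) (fun p : ℝ × (Fin d → ℝ) => θ p.1 p.2) (Set.Ici s ×ˢ Set.univ) →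
      (∀ t ∈ Set.Ici s, PeriodicIn d (θ t)) →
      (∀ t ∈ Set.Ici s, ∫ x in Set.Icc (0 : Fin d → ℝ) 1, θ t x = 0) →
      (∀ t ∈ Set.Ici s, ∀ x,
        derivWithin (fun r => θ r x) (Set.Ici s) t - ν * lap d (θ t) x
          + ∑ i, u t x i * pd d i (θ t) x = 0) →
      L2norm d (θ (s + τ ν)) ≤ (1/2) * L2norm d (θ s))
    (finv : ℝ → ℝ)
    (hf_mono : StrictMonoOn (fun a => sSup ((fun b => b * τ b) '' Set.Ioc 0 a)) (Set.Ioi 0))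
    (hf_cont : ContinuousOn (fun a => sSup ((fun b => b * τ b) '' Set.Ioc 0 a)) (Set.Ioi 0))
    (hf_bij : Set.BijOn (fun a => sSup ((fun b => b * τ b) '' Set.Ioc 0 a))
      (Set.Ioi 0) (Set.Ioi 0))
    (hfinv_pos : ∀ c > (0:ℝ), 0 < finv c)
    (hfinv_left : ∀ a > (0:ℝ), finv (sSup ((fun b => b * τ b) '' Set.Ioc 0 a)) = a)
    (hfinv_right : ∀ c > (0:ℝ), sSup ((fun b => b * τ b) '' Set.Ioc 0 (finv c)) = c) :
    ∃ σ : ℝ → ℝ,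
      ContDiffOn ℝ (⊤ : ℕ∞) σ (Set.Ico 0 1) ∧
      StrictMonoOn σ (Set.Ico 0 1) ∧
      Set.BijOn σ (Set.Ico 0 1) (Set.Ici 0) ∧
      (∀ t ∈ Set.Ico (0:ℝ) 1, deriv σ t ≤
        2 * (|Real.logb 2 (1 - t)| + 1) /
          finv ((1 - t) / (4 * (|Real.logb 2 (1 - t)| + 1)))) ∧
      ∀ ν > (0:ℝ), ∀ s ∈ Set.Ico (0:ℝ) 1, ∀ θ : ℝ → (Fin d → ℝ) → ℝ,
        ContDiffOn ℝ (⊤ : ℕ∞) (fun p : ℝ × (Fin d → ℝ) => θ p.1 p.2) (Set.Ico s 1 ×ˢ Set.univ) →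
        (∀ t ∈ Set.Ico s 1, PeriodicIn d (θ t)) →
        (∀ t ∈ Set.Ico s 1, ∫ x in Set.Icc (0 : Fin d → ℝ) 1, θ t x = 0) →
        (∀ t ∈ Set.Ico s 1, ∀ x,
          derivWithin (fun r => θ r x) (Set.Ico s 1) t - ν * lap d (θ t) x
            + ∑ i, (deriv σ t * u (σ t) x i) * pd d i (θ t) x = 0) →
        Tendsto (fun t => L2norm d (θ t)) (nhdsWithin 1 (Set.Iio 1)) (nhds 0) := by
  have hbdd : ∀ a > (0:ℝ), BddAbove ((fun b => b * τ b) '' Set.Ioc 0 a) := by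
    intro a ha
    by_contra hb
    have h1 : (0:ℝ) < sSup ((fun b => b * τ b) '' Set.Ioc 0 a) := hf_bij.mapsTo ha
    rw [Real.sSup_of_not_bddAbove hb] at h1
    exact lt_irrefl _ h1
  have hle : ∀ y > (0:ℝ), ∀ b, 0 < b → b ≤ finv y → b * τ b ≤ y := by
    intro y hy b hb hby
    have h1 : b * τ b ≤ sSup ((fun b => b * τ b) '' Set.Ioc 0 (finv y)) :=
      le_csSup (hbdd _ (hfinv_pos y hy)) ⟨b, ⟨hb, hby⟩, rfl⟩
    rwa [hfinv_right y hy] at h1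
  have hmono : ∀ x y, 0 < x → x ≤ y → finv x ≤ finv y := by
    intro x y hx hxy
    by_contra! hlt
    have h1 : sSup ((fun b => b * τ b) '' Set.Ioc 0 (finv y))
        < sSup ((fun b => b * τ b) '' Set.Ioc 0 (finv x)) :=
      hf_mono (hfinv_pos y (hx.trans_le hxy)) (hfinv_pos x hx) hlt
    rw [hfinv_right y (hx.trans_le hxy), hfinv_right x hx] at h1
    linarith
  have hsm : ∀ i, Sm (Set.Ioi 0) (fun t x => u t x i) := fun i =>
    (contDiffOn_pi.1 hu_smooth i).mono (Set.prod_mono Set.Ioi_subset_Ici_self subset_rfl)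
  have H : Hyp d u τ := by
    refine ⟨hsm, ⟨fun t ht i => (hsm i).space ht, fun t ht => hu_per t (Set.Ioi_subset_Ici_self ht),
      fun t ht => hu_div t (Set.Ioi_subset_Ici_self ht)⟩, ?_, hRE, hτ_pos⟩
    obtain ⟨M, hM⟩ := hu_bdd 2 two_pos
    refine ⟨|M|, abs_nonneg _, fun t ht x i => ?_⟩
    exact (norm_le_pi_norm (u t x) i).trans ((hM t ⟨ht.1.le, ht.2⟩ x).trans (le_abs_self M))
  set a : ℕ → ℝ := fun n => finv (yy n) with ha
  have ha0 : ∀ n, 0 < a n := fun n => hfinv_pos _ (yy_pos n)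
  set c : ℕ → ℝ := fun n => 2 * ((n:ℝ) + 1) / a n with hcdef
  have hn1 : ∀ n : ℕ, (0:ℝ) < (n:ℝ) + 1 := fun n => by positivity
  have hc0 : ∀ n, 0 < c n := fun n => div_pos (mul_pos two_pos (hn1 n)) (ha0 n)
  have hcm : Monotone c := by
    intro m n h
    have h1 : a n ≤ a m := hmono _ _ (yy_pos n) (yy_anti h)
    have h2 : (m:ℝ) ≤ n := by exact_mod_cast h
    have h3 := ha0 n
    have h4 := hn1 n
    simp only [hcdef]
    gcongr
  have hyc : ∀ n : ℕ, (1/2:ℝ) ^ n = 4 * ((n:ℝ) + 1) * yy n := fun n => by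
    have := hn1 n
    unfold yy; field_simp
  obtain ⟨σ, hσ0, hσ, hlow, hup, hpl⟩ := exists_sigma c hcm
  have hσp : ∀ t < 1, 0 < deriv σ t := fun t ht => (hc0 0).trans_le (hlow t ht)
  have hsub : Set.Ico (0:ℝ) 1 ⊆ Set.Iio 1 := fun t ht => ht.2
  have hstr := sigma_strictMono hσ hσp
  have hσpos : ∀ t, 0 < t → t < 1 → 0 < σ t := fun t h0 h1 => by
    have := hstr (show (0:ℝ) ∈ Set.Iio 1 by simp) h1 h0
    rwa [hσ0] at this
  refine ⟨σ, hσ.mono hsub, hstr.mono hsub, ?_, ?_, ?_⟩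
  · obtain ⟨κ, hκ, hκτ⟩ := H.tau_lower hd
    have hf1 : (0:ℝ) < sSup ((fun b => b * τ b) '' Set.Ioc 0 1) := 
      hf_bij.mapsTo (Set.mem_Ioi.2 one_pos)
    obtain ⟨N, hN⟩ := eventually_atTop.1 (yy_tendsto.eventually (gt_mem_nhds hf1))
    refine sigma_bij hσ hσ0 hσp hpl hκ (N := N) fun n hn => ?_
    have h1 : a n ≤ 1 := by
      have := hmono _ _ (yy_pos n) (hN n hn).le
      rwa [hfinv_left 1 one_pos] at this
    have h2 := hκτ (a n) (ha0 n) h1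
    have h3 := hle (yy n) (yy_pos n) (a n) (ha0 n) le_rfl
    have h4 : τ (a n) ≤ yy n / a n := by
      rw [le_div_iff₀ (ha0 n)]; linarith
    have h5 : c n * (1/2) ^ n / 4 = 2 * ((n:ℝ) + 1) ^ 2 * (yy n / a n) := by
      rw [hyc n]; simp only [hcdef]; ring
    have h6 : 0 ≤ yy n / a n := (div_pos (yy_pos n) (ha0 n)).le
    have h7 : (1:ℝ) ≤ 2 * ((n:ℝ) + 1) ^ 2 := by
      have : (0:ℝ) ≤ n := Nat.cast_nonneg n
      nlinarith
    rw [h5]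
    nlinarith
  · intro t ht
    obtain ⟨n, h1, h2⟩ := exists_dyadic ht.1 ht.2
    have hl := logb_lower ht.2 h1
    set l := |Real.logb 2 (1 - t)| with hldef
    refine (hup n t h2.le).trans ?_
    have hl1 : 0 < l + 1 := by linarith [hn1 n]
    have ht1 : 0 < 1 - t := by linarith [ht.2]
    have hy : 0 < (1 - t) / (4 * (l + 1)) := by positivity
    have hy2 : (1 - t) / (4 * (l + 1)) ≤ yy n := by
      unfold yy
      have h3 : 1 - t ≤ (1/2) ^ n := by unfold dy at h1; linarith
      have := hn1 n
      gcongr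
    have h4 := hmono _ _ hy hy2
    have h5 := hfinv_pos _ hy
    have h6 := ha0 n
    simp only [hcdef]
    exact div_le_div₀ (by positivity) (by linarith) h5 h4
  · intro ν hν s hs θ hθ hper hmean heq
    have hsubI : Set.Ioo s 1 ⊆ Set.Ico s 1 := Set.Ioo_subset_Ico_self
    have hsmθ : Sm (Set.Ioo s 1) θ := hθ.mono (Set.prod_mono hsubI subset_rfl)
    have hsol : IsSol d ν (fun t x i => deriv σ t * u (σ t) x i) (Set.Ioo s 1) θ := by
      refine ⟨hsmθ, fun t ht => hper t (hsubI ht), fun t ht x => ?_⟩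
      have h1 := heq t (hsubI ht) x
      rw [derivWithin_of_mem_nhds (Ico_mem_nhds ht.1 ht.2)] at h1
      linarith
    have hdr : IsDrift d (fun t x i => deriv σ t * u (σ t) x i) (Set.Ioo s 1) := by
      have hp : ∀ t ∈ Set.Ioo s 1, 0 < σ t := fun t ht => hσpos t (hs.1.trans_lt ht.1) ht.2
      refine ⟨fun t ht i => contDiff_const.mul ((hsm i).space (hp t ht)), fun t ht i x k => ?_,
        fun t ht x => ?_⟩
      · have := hu_per (σ t) (hp t ht).le i x k
        simp only at this ⊢
        rw [this]
      · have h1 : ∀ i, pd d i (fun y => deriv σ t * u (σ t) y i) x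
            = deriv σ t * pd d i (fun y => u (σ t) y i) x := fun i =>
          pd_const_mul (((hsm i).space (hp t ht)).dat x) _ i
        simp only [h1]
        rw [← Finset.mul_sum, hu_div (σ t) (hp t ht).le x, mul_zero]
    have hE := hsol.energy_anti isOpen_Ioo (convex_Ioo s 1) hν.le hdr
    obtain ⟨N1, hN1⟩ := eventually_atTop.1 (dy_tendsto.eventually (lt_mem_nhds hs.2))
    obtain ⟨N2, hN2⟩ := exists_nat_gt ν
    obtain ⟨N3, hN3⟩ := exists_nat_gt (2 / ν)
    have hfin : Tendsto (fun t => En d (θ t)) (nhdsWithin 1 (Set.Iio 1)) (nhds 0) := by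
      refine decay (fun t => En_nonneg _) hE (N := max N1 (max N2 N3)) fun n hn => ?_
      have m1 : N1 ≤ n := (le_max_left _ _).trans hn
      have m2 : N2 ≤ n := (le_max_left _ _).trans ((le_max_right _ _).trans hn)
      have m3 : N3 ≤ n := (le_max_right _ _).trans ((le_max_right _ _).trans hn)
      have m2' : ν ≤ n := hN2.le.trans (by exact_mod_cast m2)
      have m3' : 2 < n * ν := by
        have : 2 / ν < n := hN3.trans_le (by exact_mod_cast m3)
        rwa [div_lt_iff₀ hν] at this
      refine ⟨hN1 n m1, ?_⟩
      have hpw : (0:ℝ) < (1/2) ^ n := by positivity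
      refine plateau H hν hsol (fun t ht => hmean t (hsubI ht)) hE (hN1 n m1) (hc0 n)
        (hσpos _ ?_ ((ds_mem n).trans_lt (dy_lt _))) (sigma_affine hσ n (hpl n)) (hpl n) ?_
      · have := dy_nonneg n
        unfold ds; linarith
      · have hb : 0 < ν / c n := div_pos hν (hc0 n)
        have hb2 : ν / c n ≤ a n := by
          rw [div_le_iff₀ (hc0 n)]
          have h1 : a n * c n = 2 * ((n:ℝ) + 1) := by
            have := (ha0 n).ne'
            simp only [hcdef]; field_simp
          rw [h1]; linarith [hn1 n]
        have h2 := hle (yy n) (yy_pos n) _ hb hb2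
        have h3 : ν * τ (ν / c n) ≤ yy n * c n := by
          have h4 : ν * τ (ν / c n) = (ν / c n * τ (ν / c n)) * c n := by
            have := (hc0 n).ne'
            field_simp
          rw [h4]
          exact mul_le_mul_of_nonneg_right h2 (hc0 n).le
        rw [hyc n]
        have h5 : 0 < yy n * c n := mul_pos (yy_pos n) (hc0 n)
        have h6 : ν * τ (ν / c n) < ν * (c n * (4 * ((n:ℝ) + 1) * yy n) / 8) := by
          refine h3.trans_lt ?_
          have h7 : ν * (c n * (4 * ((n:ℝ) + 1) * yy n) / 8) = (yy n * c n) * ((n * ν + ν) / 2) := by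
            ring
          rw [h7]
          refine lt_mul_of_one_lt_right h5 ?_
          linarith
        exact lt_of_mul_lt_mul_left h6 hν.le
    have := hfin.sqrt
    rwa [Real.sqrt_zero] at this
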